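/- arXiv:2012.05041 — 2 statements merged into one kernel-verified Lean document; each statement's English description precedes it below -/
import Mathlib

section
/- Let q_1, …, q_e be nonzero polynomials in d real variables all of whose nonzero coefficients are positive, let v_1, …, v_e > 0, let u ∈ ℝ^d, and let P = v_1·New(q_1) + ⋯ + v_e·New(q_e). If u lies in the interior of P, then the limit as ε → 0⁺ of ε^d · ∫_{ℝ^d_{>0}} (∏_{i=1}^d x_i^{ε u_i − 1}) · (∏_{j=1}^e q_j(x)^{−ε v_j}) dx exists and equals d! · vol((P − u)°), where vol is d-dimensional Lebesgue measure and (P − u)° = {y ∈ ℝ^d : ⟨y, z⟩ ≤ 1 for all z ∈ P − u} is the polar dual of the translated polytope P − u. -/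
open scoped BigOperators Pointwise

noncomputable section

/-- The Newton polytope of a polynomial `q` in `d` variables: the convex hull in
`ℝ^d` of the exponent vectors of the monomials of `q` with nonzero coefficient. -/
def newtonPolytope {d : ℕ} (q : MvPolynomial (Fin d) ℝ) : Set (Fin d → ℝ) :=
  convexHull ℝ ((fun (a : Fin d →₀ ℕ) (i : Fin d) => (a i : ℝ)) '' ↑q.support)

/-- The polar dual `S° = {y : ⟨y,z⟩ ≤ 1 for all z ∈ S}`. -/
def polarDual {d : ℕ} (S : Set (Fin d → ℝ)) : Set (Fin d → ℝ) :=
  {y | ∀ z ∈ S, ∑ i, y i * z i ≤ 1}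

open MeasureTheory

def hh {d : ℕ} (q : MvPolynomial (Fin d) ℝ) (hq : q.support.Nonempty) (t : Fin d → ℝ) : ℝ :=
  q.support.sup' hq (fun a => ∑ i, (a i : ℝ) * t i)

lemma hh_cont {d : ℕ} (q : MvPolynomial (Fin d) ℝ) (hq : q.support.Nonempty) :
    Continuous (hh q hq) := by
  unfold hh
  apply Continuous.finset_sup'_apply
  intro a _
  fun_prop

lemma hh_smul {d : ℕ} (q : MvPolynomial (Fin d) ℝ) (hq : q.support.Nonempty) (t : Fin d → ℝ)
    (s : ℝ) (hs : 0 ≤ s) : hh q hq (s • t) ≤ s * hh q hq t := by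
  unfold hh
  apply Finset.sup'_le
  intro a ha
  have : ∑ i, (a i : ℝ) * (s • t) i = s * ∑ i, (a i : ℝ) * t i := by
    rw [Finset.mul_sum]; exact Finset.sum_congr rfl (fun i _ => by simp; ring)
  rw [this]
  exact mul_le_mul_of_nonneg_left
    (Finset.le_sup' (fun a : Fin d →₀ ℕ => ∑ i, (a i : ℝ) * t i) ha) hs

lemma le_hh {d : ℕ} (q : MvPolynomial (Fin d) ℝ) (hq : q.support.Nonempty) (t z : Fin d → ℝ)
    (hz : z ∈ newtonPolytope q) : ∑ i, t i * z i ≤ hh q hq t := by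
  have hc : Convex ℝ {z : Fin d → ℝ | ∑ i, t i * z i ≤ hh q hq t} := by
    apply convex_halfSpace_le
    constructor
    · intro x y; simp [mul_add, Finset.sum_add_distrib]
    · intro c x; simp [Finset.mul_sum, mul_left_comm]
  refine convexHull_min ?_ hc hz
  rintro _ ⟨a, ha, rfl⟩
  have := Finset.le_sup' (fun a : Fin d →₀ ℕ => ∑ i, (a i : ℝ) * t i) (Finset.mem_coe.1 ha)
  refine le_trans (le_of_eq ?_) this
  exact Finset.sum_congr rfl (fun i _ => mul_comm _ _)

lemma exists_hh {d : ℕ} (q : MvPolynomial (Fin d) ℝ) (hq : q.support.Nonempty) (t : Fin d → ℝ) :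
    ∃ z ∈ newtonPolytope q, ∑ i, t i * z i = hh q hq t := by
  obtain ⟨a, ha, h⟩ := Finset.exists_mem_eq_sup' hq
    (fun a : Fin d →₀ ℕ => ∑ i, (a i : ℝ) * t i)
  refine ⟨fun i => (a i : ℝ), subset_convexHull _ _ ⟨a, ha, rfl⟩, ?_⟩
  rw [hh, h]
  exact Finset.sum_congr rfl (fun i _ => mul_comm _ _)

/-- two-sided bound -/
lemma eval_bounds {d : ℕ} (q : MvPolynomial (Fin d) ℝ) (hq : q.support.Nonempty)
    (hpos : ∀ a ∈ q.support, 0 < q.coeff a) :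
    ∃ c C : ℝ, 0 < c ∧ 0 < C ∧ ∀ (t : Fin d → ℝ) (ε : ℝ), 0 < ε →
      c * Real.exp (hh q hq t / ε) ≤ MvPolynomial.eval (fun i => Real.exp (t i / ε)) q ∧
      MvPolynomial.eval (fun i => Real.exp (t i / ε)) q ≤ C * Real.exp (hh q hq t / ε) := by
  have key : ∀ (t : Fin d → ℝ) (ε : ℝ), MvPolynomial.eval (fun i => Real.exp (t i / ε)) q
      = ∑ a ∈ q.support, q.coeff a * Real.exp ((∑ i, (a i : ℝ) * t i) / ε) := by
    intro t ε
    rw [MvPolynomial.eval_eq']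
    refine Finset.sum_congr rfl (fun a _ => ?_)
    rw [Finset.sum_div, Real.exp_sum]
    congr 1
    refine Finset.prod_congr rfl (fun i _ => ?_)
    rw [← Real.exp_nat_mul, mul_div_assoc]
  refine ⟨q.support.inf' hq (fun a => q.coeff a), ∑ a ∈ q.support, q.coeff a, ?_, ?_, ?_⟩
  · rw [Finset.lt_inf'_iff]; exact hpos
  · exact Finset.sum_pos hpos hq
  intro t ε hε
  rw [key]
  constructor
  · obtain ⟨a, ha, h⟩ := Finset.exists_mem_eq_sup' hq
      (fun a : Fin d →₀ ℕ => ∑ i, (a i : ℝ) * t i)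
    rw [hh, h]
    refine le_trans ?_ (Finset.single_le_sum (fun b hb => ?_) ha)
    · exact mul_le_mul_of_nonneg_right (Finset.inf'_le _ ha) (Real.exp_pos _).le
    · exact mul_nonneg (hpos b hb).le (Real.exp_pos _).le
  · rw [Finset.sum_mul]
    refine Finset.sum_le_sum (fun a ha => mul_le_mul_of_nonneg_left ?_ (hpos a ha).le)
    apply Real.exp_le_exp.2
    apply div_le_div_of_nonneg_right _ hε.le
    exact Finset.le_sup' (fun a : Fin d →₀ ℕ => ∑ i, (a i : ℝ) * t i) ha

lemma eval_bounds' {d : ℕ} (q : MvPolynomial (Fin d) ℝ) (hq : q.support.Nonempty)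
    (hpos : ∀ a ∈ q.support, 0 < q.coeff a) (v : ℝ) (hv : 0 < v) :
    ∃ c C : ℝ, 0 < c ∧ 0 < C ∧ ∀ (t : Fin d → ℝ) (ε : ℝ), 0 < ε →
      C ^ (-(ε * v)) * Real.exp (-(v * hh q hq t)) ≤
        (MvPolynomial.eval (fun i => Real.exp (t i / ε)) q) ^ (-(ε * v)) ∧
      (MvPolynomial.eval (fun i => Real.exp (t i / ε)) q) ^ (-(ε * v)) ≤
        c ^ (-(ε * v)) * Real.exp (-(v * hh q hq t)) := by
  obtain ⟨c, C, hc, hC, h⟩ := eval_bounds q hq hpos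
  refine ⟨c, C, hc, hC, fun t ε hε => ?_⟩
  obtain ⟨h1, h2⟩ := h t ε hε
  have e1 : ∀ K : ℝ, 0 < K → (K * Real.exp (hh q hq t / ε)) ^ (-(ε * v)) =
      K ^ (-(ε * v)) * Real.exp (-(v * hh q hq t)) := by
    intro K hK
    rw [Real.mul_rpow hK.le (Real.exp_pos _).le, ← Real.exp_mul]
    congr 2
    field_simp
  have hn : -(ε * v) ≤ 0 := by have := mul_pos hε hv; linarith
  have p1 : 0 < c * Real.exp (hh q hq t / ε) := by positivity
  rw [← e1 C hC, ← e1 c hc]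
  exact ⟨Real.rpow_le_rpow_of_nonpos (p1.trans_le h1) h2 hn,
    Real.rpow_le_rpow_of_nonpos p1 h1 hn⟩

lemma gamma_lint (d : ℕ) : ∫⁻ s in Set.Ioi (0:ℝ), ENNReal.ofReal (Real.exp (-s) * s ^ d)
    = ENNReal.ofReal (d.factorial : ℝ) := by
  have h := Real.Gamma_eq_integral (s := (d:ℝ) + 1) (by positivity)
  have hi := Real.GammaIntegral_convergent (s := (d:ℝ) + 1) (by positivity)
  rw [Real.Gamma_nat_eq_factorial] at h
  simp only [add_sub_cancel_right, Real.rpow_natCast] at h hi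
  rw [h, ofReal_integral_eq_lintegral_ofReal hi]
  rw [Filter.EventuallyLE, ae_restrict_iff' measurableSet_Ioi]
  refine Filter.Eventually.of_forall (fun x hx => ?_)
  have : (0:ℝ) < x := hx
  simp only [Pi.zero_apply]; positivity

lemma exp_lint (a : ℝ) (ha : 0 ≤ a) : ENNReal.ofReal (Real.exp (-a)) =
    ∫⁻ s in Set.Ioi (0:ℝ), (if a ≤ s then ENNReal.ofReal (Real.exp (-s)) else 0) := by
  have h1 := integral_exp_neg_Ioi a
  rw [← h1, ofReal_integral_eq_lintegral_ofReal (integrableOn_exp_neg_Ioi a)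
    (Filter.Eventually.of_forall fun x => (Real.exp_pos _).le)]
  rw [← lintegral_indicator measurableSet_Ioi, ← lintegral_indicator measurableSet_Ioi]
  apply lintegral_congr_ae
  have : ∀ᵐ x : ℝ, x ≠ a := by simp [ae_iff]
  filter_upwards [this] with x hx
  by_cases h : a < x
  · have h0 : 0 < x := ha.trans_lt h
    simp [Set.indicator, h, h0, h.le]
  · have : ¬ a ≤ x := fun h' => h (lt_of_le_of_ne h' (Ne.symm hx))
    simp [Set.indicator, h, this]

lemma layer {d : ℕ} (g : (Fin d → ℝ) → ℝ) (hg : Continuous g) (h0 : ∀ t, 0 ≤ g t)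
    (hs : ∀ s : ℝ, 0 < s → ∀ t, g (s • t) ≤ s * g t) :
    ∫⁻ t, ENNReal.ofReal (Real.exp (-g t)) =
      ENNReal.ofReal (d.factorial : ℝ) * volume {t | g t ≤ 1} := by
  have hset : ∀ s : ℝ, 0 < s → {t | g t ≤ s} = s • {t | g t ≤ 1} := by
    intro s hs0
    ext t
    rw [Set.mem_smul_set_iff_inv_smul_mem₀ hs0.ne']
    simp only [Set.mem_ofPred_eq]
    constructor
    · intro h
      refine (hs s⁻¹ (by positivity) t).trans ?_
      rw [inv_mul_le_iff₀ hs0]; simpa using h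
    · intro h
      have := hs s hs0 (s⁻¹ • t)
      rw [smul_inv_smul₀ hs0.ne'] at this
      nlinarith
  have hm : Measurable (fun p : (Fin d → ℝ) × ℝ =>
      if g p.1 ≤ p.2 then ENNReal.ofReal (Real.exp (-p.2)) else 0) := by
    refine Measurable.ite ?_ (by fun_prop) measurable_const
    exact measurableSet_le (hg.measurable.comp measurable_fst) measurable_snd
  calc ∫⁻ t, ENNReal.ofReal (Real.exp (-g t))
      = ∫⁻ t, ∫⁻ s in Set.Ioi (0:ℝ),
          (if g t ≤ s then ENNReal.ofReal (Real.exp (-s)) else 0) :=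
        lintegral_congr fun t => exp_lint _ (h0 t)
    _ = ∫⁻ s in Set.Ioi (0:ℝ), ∫⁻ t,
          (if g t ≤ s then ENNReal.ofReal (Real.exp (-s)) else 0) :=
        lintegral_lintegral_swap hm.aemeasurable
    _ = ∫⁻ s in Set.Ioi (0:ℝ), ENNReal.ofReal (Real.exp (-s) * s ^ d) * volume {t | g t ≤ 1} := by
        refine setLIntegral_congr_fun measurableSet_Ioi (fun s hs0 => ?_)
        have hs0' : (0:ℝ) < s := hs0
        have hms : MeasurableSet {t | g t ≤ s} := measurableSet_le hg.measurable measurable_const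
        have : (fun t => if g t ≤ s then ENNReal.ofReal (Real.exp (-s)) else 0) =
            Set.indicator {t | g t ≤ s} (fun _ => ENNReal.ofReal (Real.exp (-s))) := by
          ext t; simp [Set.indicator]
        simp only [this]
        rw [lintegral_indicator hms, setLIntegral_const, hset s hs0', Measure.addHaar_smul,
          ENNReal.ofReal_mul (Real.exp_pos _).le, mul_assoc]
        simp [abs_of_pos hs0']
    _ = _ := by
        rw [lintegral_mul_const _ (by fun_prop), gamma_lint]

lemma cov {d : ℕ} (ε : ℝ) (hε : 0 < ε) (F : (Fin d → ℝ) → ℝ) :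
    ε ^ d * ∫ x in {x : Fin d → ℝ | ∀ i, 0 < x i}, F x =
      ∫ t : Fin d → ℝ, (∏ i, Real.exp (t i / ε)) * F (fun i => Real.exp (t i / ε)) := by
  let f : (Fin d → ℝ) → (Fin d → ℝ) := fun t i => Real.exp (t i / ε)
  let f' : (Fin d → ℝ) → ((Fin d → ℝ) →L[ℝ] (Fin d → ℝ)) := fun t =>
    ContinuousLinearMap.pi (fun i => (Real.exp (t i / ε) / ε) •
      (ContinuousLinearMap.proj i : (Fin d → ℝ) →L[ℝ] ℝ))
  have himg : {x : Fin d → ℝ | ∀ i, 0 < x i} = f '' Set.univ := by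
    ext x
    simp only [Set.mem_ofPred_eq, Set.image_univ, Set.mem_range]
    constructor
    · intro hx
      refine ⟨fun i => ε * Real.log (x i), ?_⟩
      ext i
      simp only [f]
      rw [mul_div_cancel_left₀ _ hε.ne', Real.exp_log (hx i)]
    · rintro ⟨t, rfl⟩ i
      exact Real.exp_pos _
  have hder : ∀ t ∈ Set.univ, HasFDerivWithinAt f (f' t) Set.univ t := by
    intro t _
    apply HasFDerivAt.hasFDerivWithinAt
    rw [hasFDerivAt_pi']
    intro i
    have h1 : HasFDerivAt (fun t : Fin d → ℝ => t i)
        (ContinuousLinearMap.proj i : (Fin d → ℝ) →L[ℝ] ℝ) t := hasFDerivAt_apply i t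
    have h2 : HasDerivAt (fun y : ℝ => Real.exp (y / ε)) (Real.exp (t i / ε) / ε) (t i) := by
      have := ((hasDerivAt_id (t i)).div_const ε).exp
      simpa [div_eq_mul_inv] using this
    have := h2.comp_hasFDerivAt t h1
    exact this
  have hinj : Set.InjOn f Set.univ := by
    intro x _ y _ h
    ext i
    have := congrFun h i
    simp only [f] at this
    have := Real.exp_injective this
    field_simp at this
    exact this
  have hdet : ∀ t, (f' t).det = ∏ i, (Real.exp (t i / ε) / ε) := by
    intro t
    have : ((f' t : (Fin d → ℝ) →L[ℝ] (Fin d → ℝ)) : (Fin d → ℝ) →ₗ[ℝ] (Fin d → ℝ)) =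
        Matrix.toLin' (Matrix.diagonal (fun i => Real.exp (t i / ε) / ε)) := by
      apply LinearMap.ext
      intro x
      ext i
      simp [f', Matrix.mulVec_diagonal]
    rw [ContinuousLinearMap.det, this, LinearMap.det_toLin', Matrix.det_diagonal]
  rw [himg, integral_image_eq_integral_abs_det_fderiv_smul volume MeasurableSet.univ hder hinj,
    ← integral_const_mul, setIntegral_univ]
  congr 1
  ext t
  rw [hdet, abs_of_pos (Finset.prod_pos fun i _ => by positivity), smul_eq_mul,
    Finset.prod_div_distrib]
  simp only [Finset.prod_const, Finset.card_univ, Fintype.card_fin, f]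
  field_simp

/-- If `u` is interior to `P = v₁·New(q₁) + ⋯ + vₑ·New(qₑ)`, then the limit as
`ε → 0⁺` of `ε^d ∫_{ℝ^d_{>0}} x^{εu-1} ∏ qⱼ(x)^{-εvⱼ} dx` exists and equals
`d! · vol((P-u)°)`. -/
theorem stmt12 (d e : ℕ) (q : Fin e → MvPolynomial (Fin d) ℝ)
    (hq : ∀ j, q j ≠ 0)
    (hqpos : ∀ j, ∀ a ∈ (q j).support, 0 < (q j).coeff a)
    (v : Fin e → ℝ) (hv : ∀ j, 0 < v j) (u : Fin d → ℝ)
    (hu : u ∈ interior (∑ j, v j • newtonPolytope (q j))) :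
    Filter.Tendsto
      (fun ε : ℝ => ε ^ d *
        ∫ x in {x : Fin d → ℝ | ∀ i, 0 < x i},
          (∏ i, x i ^ (ε * u i - 1)) *
            ∏ j, (MvPolynomial.eval x (q j)) ^ (-(ε * v j)))
      (nhdsWithin 0 (Set.Ioi 0))
      (nhds ((Nat.factorial d : ℝ) *
        (MeasureTheory.volume
          (polarDual ((fun z => z - u) '' (∑ j, v j • newtonPolytope (q j))))).toReal)) := by
  have hne : ∀ j, (q j).support.Nonempty := fun j => MvPolynomial.support_nonempty.2 (hq j)
  set P := ∑ j, v j • newtonPolytope (q j) with hP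
  let g : (Fin d → ℝ) → ℝ := fun t => ∑ j, v j * hh (q j) (hne j) t - ∑ i, t i * u i
  have gcont : Continuous g := by
    have := fun j => hh_cont (q j) (hne j)
    fun_prop
  have le_g : ∀ t, ∀ z ∈ P, ∑ i, t i * z i - ∑ i, t i * u i ≤ g t := by
    intro t z hz
    rw [hP, Set.mem_fintype_sum] at hz
    obtain ⟨w, hw, rfl⟩ := hz
    choose y hy hyw using fun j => Set.mem_smul_set.1 (hw j)
    have : ∑ i, t i * (∑ j, w j) i = ∑ j, v j * ∑ i, t i * y j i := by
      simp only [Finset.sum_apply, Finset.mul_sum, ← hyw]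
      rw [Finset.sum_comm]
      refine Finset.sum_congr rfl fun j _ => Finset.sum_congr rfl fun i _ => ?_
      simp; ring
    rw [this]
    exact sub_le_sub_right (Finset.sum_le_sum fun j _ =>
      mul_le_mul_of_nonneg_left (le_hh _ _ _ _ (hy j)) (hv j).le) _
  have ex_g : ∀ t, ∃ z ∈ P, ∑ i, t i * z i - ∑ i, t i * u i = g t := by
    intro t
    choose y hy hyw using fun j => exists_hh (q j) (hne j) t
    refine ⟨∑ j, v j • y j, ?_, ?_⟩
    · rw [hP, Set.mem_fintype_sum]
      exact ⟨fun j => v j • y j, fun j => Set.smul_mem_smul_set (hy j), rfl⟩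
    · simp only [g, ← hyw]
      congr 1
      simp only [Finset.sum_apply, Finset.mul_sum]
      rw [Finset.sum_comm]
      refine Finset.sum_congr rfl fun j _ => Finset.sum_congr rfl fun i _ => ?_
      simp; ring
  have g0 : ∀ t, 0 ≤ g t := fun t => by simpa using le_g t u (interior_subset hu)
  have gs : ∀ s : ℝ, 0 < s → ∀ t, g (s • t) ≤ s * g t := by
    intro s hs t
    have e1 : ∑ i, (s • t) i * u i = s * ∑ i, t i * u i := by
      rw [Finset.mul_sum]; exact Finset.sum_congr rfl fun i _ => by simp; ring
    simp only [g]
    rw [e1, mul_sub, Finset.mul_sum Finset.univ (fun j => v j * hh (q j) (hne j) t)]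
    refine sub_le_sub_right (Finset.sum_le_sum fun j _ => ?_) _
    have := mul_le_mul_of_nonneg_left (hh_smul (q j) (hne j) t s hs.le) (hv j).le
    linarith
  have hpol : polarDual ((fun z => z - u) '' P) = {t | g t ≤ 1} := by
    ext t
    simp only [polarDual, Set.mem_ofPred_eq, Set.forall_mem_image, Pi.sub_apply, mul_sub,
      Finset.sum_sub_distrib]
    constructor
    · intro h
      obtain ⟨z, hz, h1⟩ := ex_g t
      exact h1 ▸ h hz
    · intro h z hz
      exact (le_g t z hz).trans h
  have hfin : volume {t | g t ≤ 1} < ⊤ := by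
    obtain ⟨r, hr, hball⟩ := Metric.mem_nhds_iff.1 (mem_interior_iff_mem_nhds.1 hu)
    have hsub : {t | g t ≤ 1} ⊆ Set.Icc (fun _ => -(2 / r)) (fun _ => 2 / r) := by
      intro t ht
      have hb : ∀ i (s : ℝ), |s| < r → s * t i ≤ 1 := by
        intro i s hs
        have hmem : u + Pi.single i s ∈ P := by
          apply hball
          simpa [Metric.mem_ball, dist_eq_norm, Pi.norm_single] using hs
        have := (le_g t _ hmem).trans ht
        simp only [Pi.add_apply, mul_add, Finset.sum_add_distrib] at this
        rw [add_sub_cancel_left, Finset.sum_eq_single i] at this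
        · simpa [mul_comm] using this
        · intro b _ hbi; simp [hbi]
        · simp
      have h1 : |r / 2| < r := by rw [abs_of_pos (by positivity)]; linarith
      constructor
      · intro i
        have := hb i (-(r / 2)) (by rwa [abs_neg])
        show -(2 / r) ≤ t i
        rw [neg_le, le_div_iff₀ hr]; linarith
      · intro i
        have := hb i (r / 2) h1
        show t i ≤ 2 / r
        rw [le_div_iff₀ hr]; linarith
    exact (measure_mono hsub).trans_lt isCompact_Icc.measure_lt_top
  have hlay := layer g gcont g0 gs
  have hint : Integrable (fun t => Real.exp (-g t)) := by
    refine ⟨(by fun_prop : Continuous fun t => Real.exp (-g t)).aestronglyMeasurable, ?_⟩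
    rw [hasFiniteIntegral_iff_ofReal (Filter.Eventually.of_forall fun t => (Real.exp_pos _).le),
      hlay]
    exact ENNReal.mul_lt_top ENNReal.ofReal_lt_top hfin
  have hval : (Nat.factorial d : ℝ) * (volume (polarDual ((fun z => z - u) '' P))).toReal =
      ∫ t, Real.exp (-g t) := by
    rw [integral_eq_lintegral_of_nonneg_ae
      (Filter.Eventually.of_forall fun t => (Real.exp_pos _).le) hint.1, hlay, hpol,
      ENNReal.toReal_mul, ENNReal.toReal_ofReal (by positivity)]
  rw [hval]
  choose c C hc hC hb using fun j => eval_bounds' (q j) (hne j) (hqpos j) (v j) (hv j)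
  let G : ℝ → (Fin d → ℝ) → ℝ := fun ε t => Real.exp (∑ i, t i * u i) *
    ∏ j, (MvPolynomial.eval (fun i => Real.exp (t i / ε)) (q j)) ^ (-(ε * v j))
  have hG : ∀ ε : ℝ, 0 < ε → ε ^ d *
        ∫ x in {x : Fin d → ℝ | ∀ i, 0 < x i},
          (∏ i, x i ^ (ε * u i - 1)) *
            ∏ j, (MvPolynomial.eval x (q j)) ^ (-(ε * v j)) = ∫ t, G ε t := by
    intro ε hε
    rw [cov ε hε]
    congr 1
    ext t
    simp only [G]
    rw [← mul_assoc, ← Finset.prod_mul_distrib, Real.exp_sum]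
    congr 1
    refine Finset.prod_congr rfl fun i _ => ?_
    rw [← Real.exp_mul, ← Real.exp_add]
    congr 1
    field_simp
    ring
  have hexp : ∀ t, Real.exp (-g t) = Real.exp (∑ i, t i * u i) *
      ∏ j, Real.exp (-(v j * hh (q j) (hne j) t)) := by
    intro t
    rw [← Real.exp_sum, ← Real.exp_add]
    congr 1
    simp only [g, Finset.sum_neg_distrib]
    ring
  have hlow : ∀ ε : ℝ, 0 < ε → ∀ t, (∏ j, C j ^ (-(ε * v j))) * Real.exp (-g t) ≤ G ε t := by
    intro ε hε t
    rw [hexp, mul_left_comm, ← Finset.prod_mul_distrib]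
    refine mul_le_mul_of_nonneg_left (Finset.prod_le_prod (fun j _ => ?_)
      fun j _ => (hb j t ε hε).1) (Real.exp_pos _).le
    exact mul_nonneg (Real.rpow_nonneg (hC j).le _) (Real.exp_pos _).le
  have hGnn : ∀ ε : ℝ, 0 < ε → ∀ t, 0 ≤ G ε t := by
    intro ε hε t
    refine le_trans ?_ (hlow ε hε t)
    exact mul_nonneg (Finset.prod_nonneg fun j _ => Real.rpow_nonneg (hC j).le _)
      (Real.exp_pos _).le
  have hup : ∀ ε : ℝ, 0 < ε → ∀ t, G ε t ≤ (∏ j, c j ^ (-(ε * v j))) * Real.exp (-g t) := by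
    intro ε hε t
    rw [hexp, mul_left_comm, ← Finset.prod_mul_distrib]
    refine mul_le_mul_of_nonneg_left (Finset.prod_le_prod (fun j _ => ?_)
      fun j _ => (hb j t ε hε).2) (Real.exp_pos _).le
    refine le_trans ?_ (hb j t ε hε).1
    exact mul_nonneg (Real.rpow_nonneg (hC j).le _) (Real.exp_pos _).le
  have hlim : ∀ K : Fin e → ℝ, (∀ j, 0 < K j) →
      Filter.Tendsto (fun ε : ℝ => ∏ j, K j ^ (-(ε * v j))) (nhdsWithin 0 (Set.Ioi 0))
        (nhds 1) := by
    intro K hK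
    have hcont : Continuous (fun ε : ℝ => ∏ j, K j ^ (-(ε * v j))) := by
      refine continuous_finsetProd _ fun j _ => ?_
      exact Continuous.rpow continuous_const (by fun_prop) fun x => Or.inl (hK j).ne'
    have := hcont.tendsto 0
    simp only [zero_mul, neg_zero, Real.rpow_zero, Finset.prod_const_one] at this
    exact this.mono_left nhdsWithin_le_nhds
  have hpos : ∀ᶠ ε : ℝ in nhdsWithin 0 (Set.Ioi 0), 0 < ε := eventually_mem_nhdsWithin
  have main : Filter.Tendsto (fun ε => ∫ t, G ε t) (nhdsWithin 0 (Set.Ioi 0))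
      (nhds (∫ t, Real.exp (-g t))) := by
    refine tendsto_integral_filter_of_dominated_convergence (fun t => 2 * Real.exp (-g t))
      ?_ ?_ (hint.const_mul 2) ?_
    · refine Filter.Eventually.of_forall fun ε => ?_
      apply Measurable.aestronglyMeasurable
      refine Measurable.mul (by fun_prop) (Finset.measurable_prod _ fun j _ => ?_)
      refine Measurable.pow_const ?_ _
      exact (MvPolynomial.continuous_eval (q j)).measurable.comp (by fun_prop)
    · filter_upwards [hpos, (hlim c hc).eventually (gt_mem_nhds one_lt_two)] with ε hε h2
      refine Filter.Eventually.of_forall fun t => ?_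
      rw [Real.norm_of_nonneg (hGnn ε hε t)]
      exact (hup ε hε t).trans (mul_le_mul_of_nonneg_right h2.le (Real.exp_pos _).le)
    · refine Filter.Eventually.of_forall fun t => ?_
      have l1 := (hlim C hC).mul_const (Real.exp (-g t))
      have l2 := (hlim c hc).mul_const (Real.exp (-g t))
      rw [one_mul] at l1 l2
      refine tendsto_of_tendsto_of_tendsto_of_le_of_le' l1 l2 ?_ ?_
      · filter_upwards [hpos] with ε hε using hlow ε hε t
      · filter_upwards [hpos] with ε hε using hup ε hε t
  refine main.congr' ?_
  filter_upwards [hpos] with ε hε using (hG ε hε).symm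

end
end

section
/- Let s_{23}, s_{24}, s_{25}, s_{34}, s_{35}, s_{45}, s_{36}, s_{46}, s_{56} be positive real numbers and define L(y_1, y_2, y_3) = s_{23} log y_1 + s_{34} log y_2 + s_{45} log y_3 + s_{24} log(y_1+y_2) + s_{25} log(y_1+y_2+y_3) + s_{35} log(y_2+y_3) + s_{36} log(1+y_2+y_3) + s_{46} log(1+y_3) − (Σ_{(i,j)} s_{ij}) log(1+y_1+y_2+y_3), where the sum is over the nine indices above. Let Crit(L) be the set of ξ ∈ ℂ³ at which the nine quantities ξ_1, ξ_2, ξ_3, ξ_1+ξ_2, ξ_1+ξ_2+ξ_3, ξ_2+ξ_3, 1+ξ_2+ξ_3, 1+ξ_3, 1+ξ_1+ξ_2+ξ_3 are all nonzero and the three rational critical equations ∂L/∂y_k = 0 (k = 1,2,3) hold. Define s_{12} = s_{34}+s_{35}+s_{36}+s_{45}+s_{46}+s_{56}, s_{16} = s_{23}+s_{24}+s_{25}+s_{34}+s_{35}+s_{45}, s_{123} = s_{45}+s_{46}+s_{56}, s_{234} = s_{23}+s_{24}+s_{34}, and s_{345} = s_{34}+s_{35}+s_{45}. Then Crit(L)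 consists of exactly six points, the toric Hessian H_L(ξ) (the 3×3 matrix with entries θ_iθ_jL, θ_i = y_i ∂/∂y_i) is nonsingular at each ξ ∈ Crit(L), and Σ_{ξ∈Crit(L)} (−det(H_L(ξ))^{−1}) = 1/(s_{12} s_{34} s_{56}) + 1/(s_{12} s_{56} s_{123}) + 1/(s_{23} s_{56} s_{123}) + 1/(s_{23} s_{56} s_{234}) + 1/(s_{34} s_{56} s_{234}) + 1/(s_{16} s_{23} s_{45}) + 1/(s_{12} s_{34} s_{345}) + 1/(s_{12} s_{45} s_{123}) + 1/(s_{12} s_{45} s_{345}) + 1/(s_{16} s_{23} s_{234}) + 1/(s_{16} s_{34} s_{234}) + 1/(s_{16} s_{34} s_{345}) + 1/(s_{16} s_{45} s_{345}) + 1/(s_{23} s_{45} s_{123}). -/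
open scoped BigOperators

noncomputable section

/-- The constant terms of the nine affine-linear forms appearing in the six-point
CHY log-likelihood in the positive parameters `y₁, y₂, y₃`:
`y₁, y₂, y₃, y₁+y₂, y₁+y₂+y₃, y₂+y₃, 1+y₂+y₃, 1+y₃, 1+y₁+y₂+y₃`. -/
def amp6Const : Fin 9 → ℝ := ![0, 0, 0, 0, 0, 0, 1, 1, 1]

/-- The linear coefficient vectors of the nine affine-linear forms. -/
def amp6Lin : Fin 9 → Fin 3 → ℝ :=
  ![![1, 0, 0], ![0, 1, 0], ![0, 0, 1], ![1, 1, 0], ![1, 1, 1],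
    ![0, 1, 1], ![0, 1, 1], ![0, 0, 1], ![1, 1, 1]]

/-- The coefficients of the nine logarithmic terms of
`L = s₂₃ log y₁ + s₃₄ log y₂ + s₄₅ log y₃ + s₂₄ log(y₁+y₂) + s₂₅ log(y₁+y₂+y₃)
+ s₃₅ log(y₂+y₃) + s₃₆ log(1+y₂+y₃) + s₄₆ log(1+y₃) - (∑ sᵢⱼ) log(1+y₁+y₂+y₃)`. -/
def amp6Coeff (s23 s24 s25 s34 s35 s45 s36 s46 s56 : ℝ) : Fin 9 → ℝ :=
  ![s23, s34, s45, s24, s25, s35, s36, s46,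
    -(s23 + s24 + s25 + s34 + s35 + s45 + s36 + s46 + s56)]

/-- The nine affine-linear forms, evaluated at a complex point. -/
def amp6L (a : Fin 9) (y : Fin 3 → ℂ) : ℂ :=
  (amp6Const a : ℂ) + ∑ i, (amp6Lin a i : ℂ) * y i

/-- The critical set `Crit(L)`: points where the nine forms are nonzero and the
three rational critical equations `∂L/∂y_k = ∑ₐ cₐ dₐₖ/ℓₐ(y) = 0` hold. -/
def amp6Crit (c : Fin 9 → ℝ) : Set (Fin 3 → ℂ) :=
  {y | (∀ a, amp6L a y ≠ 0) ∧
    ∀ k : Fin 3, ∑ a, (c a : ℂ) * (amp6Lin a k : ℂ) / amp6L a y = 0}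

/-- The toric Hessian `H_L(y) = (θᵢθⱼL(y))` with `θᵢ = yᵢ ∂/∂yᵢ`, as a rational
expression: `θᵢθⱼL = ∑ₐ cₐ dₐⱼ (δᵢⱼ yᵢ ℓₐ(y) - yᵢ yⱼ dₐᵢ) / ℓₐ(y)²`. -/
def amp6H (c : Fin 9 → ℝ) (y : Fin 3 → ℂ) : Matrix (Fin 3) (Fin 3) ℂ :=
  Matrix.of fun i j =>
    ∑ a, (c a : ℂ) * (amp6Lin a j : ℂ) *
      ((if i = j then y i * amp6L a y else 0) - y i * y j * (amp6Lin a i : ℂ)) /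
      (amp6L a y) ^ 2

structure SE {F : Type*} [Field F] (s23 s24 s25 s34 s35 s45 s36 s46 s56 a b c : F) : Prop where
  a0 : a ≠ 0
  b0 : b ≠ 0
  c0 : c ≠ 0
  a1 : 1 - a ≠ 0
  b1 : 1 - b ≠ 0
  c1 : 1 - c ≠ 0
  ab : b - a ≠ 0
  ac : c - a ≠ 0
  bc : c - b ≠ 0
  e3 : s23 / a - s34 / (b - a) - s35 / (c - a) = s36 / (1 - a)
  e4 : s24 / b + s34 / (b - a) - s45 / (c - b) = s46 / (1 - b)
  e5 : s25 / c + s35 / (c - a) + s45 / (c - b) = s56 / (1 - c)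

theorem SE.swap12 {F : Type*} [Field F] {s23 s24 s25 s34 s35 s45 s36 s46 s56 a b c : F}
    (h : SE s23 s24 s25 s34 s35 s45 s36 s46 s56 a b c) :
    SE s24 s23 s25 s34 s45 s35 s46 s36 s56 b a c where
  a0 := h.b0
  b0 := h.a0
  c0 := h.c0
  a1 := h.b1
  b1 := h.a1
  c1 := h.c1
  ab := by rw [← neg_sub]; exact neg_ne_zero.mpr h.ab
  ac := h.bc
  bc := h.ac
  e3 := by rw [← neg_sub b a, div_neg, ← h.e4]; ring
  e4 := by rw [← neg_sub b a, div_neg, ← h.e3]; ring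
  e5 := by rw [← h.e5]; ring

theorem SE.swap23 {F : Type*} [Field F] {s23 s24 s25 s34 s35 s45 s36 s46 s56 a b c : F}
    (h : SE s23 s24 s25 s34 s35 s45 s36 s46 s56 a b c) :
    SE s23 s25 s24 s35 s34 s45 s36 s56 s46 a c b where
  a0 := h.a0
  b0 := h.c0
  c0 := h.b0
  a1 := h.a1
  b1 := h.c1
  c1 := h.b1
  ab := h.ac
  ac := h.ab
  bc := by rw [← neg_sub]; exact neg_ne_zero.mpr h.bc
  e3 := by rw [← h.e3]; ring
  e4 := by rw [← neg_sub c b, div_neg, ← h.e5]; ring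
  e5 := by rw [← neg_sub c b, div_neg, ← h.e4]; ring

/-- determinant of a symmetric 3x3 matrix with negated off-diagonal entries -/
def D3 {F : Type*} [Field F] (d1 d2 d3 p q r : F) : F :=
  d1 * d2 * d3 - 2 * p * q * r - d1 * r ^ 2 - d2 * q ^ 2 - d3 * p ^ 2

def K3 {F : Type*} [Field F] (w23 w24 w25 w34 w35 w45 : F) : F :=
  D3 (w23 + w34 + w35) (w24 + w34 + w45) (w25 + w35 + w45) w34 w35 w45

theorem K3_zero {F : Type*} [Field F] {w23 w24 w25 w34 w35 w45 x y z : F}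
    (h1 : w23 * x + w34 * (x - y) + w35 * (x - z) = 0)
    (h2 : w24 * y + w34 * (y - x) + w45 * (y - z) = 0)
    (h3 : w25 * z + w35 * (z - x) + w45 * (z - y) = 0)
    (hz : x ≠ 0 ∨ y ≠ 0 ∨ z ≠ 0) : K3 w23 w24 w25 w34 w35 w45 = 0 := by
  have key : x * K3 w23 w24 w25 w34 w35 w45 = 0 ∧ y * K3 w23 w24 w25 w34 w35 w45 = 0 ∧
      z * K3 w23 w24 w25 w34 w35 w45 = 0 := by
    unfold K3 D3
    refine ⟨?_, ?_, ?_⟩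
    · linear_combination ((w24 + w34 + w45) * (w25 + w35 + w45) - w45 ^ 2) * h1 +
        (w34 * (w25 + w35 + w45) + w35 * w45) * h2 + (w34 * w45 + w35 * (w24 + w34 + w45)) * h3
    · linear_combination (w34 * (w25 + w35 + w45) + w35 * w45) * h1 +
        ((w23 + w34 + w35) * (w25 + w35 + w45) - w35 ^ 2) * h2 +
        (w45 * (w23 + w34 + w35) + w35 * w34) * h3
    · linear_combination (w34 * w45 + w35 * (w24 + w34 + w45)) * h1 +
        (w45 * (w23 + w34 + w35) + w35 * w34) * h2 +
        ((w23 + w34 + w35) * (w24 + w34 + w45) - w34 ^ 2) * h3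
  obtain ⟨k1, k2, k3⟩ := key
  rcases hz with h | h | h
  · exact (mul_eq_zero.mp k1).resolve_left h
  · exact (mul_eq_zero.mp k2).resolve_left h
  · exact (mul_eq_zero.mp k3).resolve_left h

def A6 {F : Type*} [Field F] (u v w : F) : Fin 6 → F :=
  ![1 / (u * (v - u) * (w - v)), 1 / (v * (u - v) * (w - u)), 1 / (u * (w - u) * (v - w)),
    1 / (v * (w - v) * (u - w)), 1 / (w * (u - w) * (v - u)), 1 / (w * (v - w) * (u - v))]

def C6 {F : Type*} [Field F] (t23 t24 t25 t34 t35 t45 : F) : Fin 6 → F :=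
  ![t23 * (t24 + t34) * (t25 + t35 + t45), t24 * (t23 - t34) * (t25 + t45 + t35),
    t23 * (t25 + t35) * (t24 + t34 - t45), t24 * (t25 + t45) * (t23 - t34 - t35),
    t25 * (t23 - t35) * (t24 - t45 + t34), t25 * (t24 - t45) * (t23 - t35 - t34)]

theorem sum_A6_C6 {F : Type*} [Field F] {u v w : F} (t23 t24 t25 t34 t35 t45 : F)
    (hu : u ≠ 0) (hv : v ≠ 0) (hw : w ≠ 0) (huv : v - u ≠ 0) (huw : w - u ≠ 0)
    (hvw : w - v ≠ 0) :
    ∑ i, A6 u v w i * C6 t23 t24 t25 t34 t35 t45 i =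
      K3 (t23 / u) (t24 / v) (t25 / w) (t34 / (v - u)) (t35 / (w - u)) (t45 / (w - v)) := by
  have e1 : u - v = -(v - u) := by ring
  have e2 : u - w = -(w - u) := by ring
  have e3 : v - w = -(w - v) := by ring
  simp only [Fin.sum_univ_succ, Fin.sum_univ_zero, A6, C6, K3, D3, Matrix.cons_val_zero,
    Matrix.cons_val_succ, e1, e2, e3]
  field_simp
  ring

/-- the bilinear kernel -/
theorem orth {F : Type*} [Field F] {s23 s24 s25 s34 s35 s45 s36 s46 s56 a b c a' b' c' : F}
    (h : SE s23 s24 s25 s34 s35 s45 s36 s46 s56 a b c)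
    (h' : SE s23 s24 s25 s34 s35 s45 s36 s46 s56 a' b' c')
    (hne : a ≠ a' ∨ b ≠ b' ∨ c ≠ c') :
    K3 (s23 / a' / (a / (1 - a))) (s24 / b' / (b / (1 - b))) (s25 / c' / (c / (1 - c)))
      (s34 / (b' - a') / (b / (1 - b) - a / (1 - a)))
      (s35 / (c' - a') / (c / (1 - c) - a / (1 - a)))
      (s45 / (c' - b') / (c / (1 - c) - b / (1 - b))) = 0 := by
  obtain ⟨a0, b0, c0, a1, b1, c1, ab, ac, bc, e3, e4, e5⟩ := h
  obtain ⟨a0', b0', c0', a1', b1', c1', ab', ac', bc', e3', e4', e5'⟩ := h'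
  have q1 : b / (1 - b) - a / (1 - a) = (b - a) / ((1 - a) * (1 - b)) := by field_simp; ring
  have q2 : c / (1 - c) - a / (1 - a) = (c - a) / ((1 - a) * (1 - c)) := by field_simp; ring
  have q3 : c / (1 - c) - b / (1 - b) = (c - b) / ((1 - b) * (1 - c)) := by field_simp; ring
  rw [q1, q2, q3]
  have gen0 : ∀ s x x' : F, x ≠ 0 → x' ≠ 0 → 1 - x ≠ 0 →
      s / x' / (x / (1 - x)) * ((x - x') / (1 - x)) = s / x' - s / x := by
    intro s x x' h1 h2 h3
    field_simp
  have gen : ∀ s x x' y y' : F, 1 - x ≠ 0 → 1 - y ≠ 0 → y - x ≠ 0 → y' - x' ≠ 0 →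
      s / (y' - x') / ((y - x) / ((1 - x) * (1 - y))) * ((x - x') / (1 - x) - (y - y') / (1 - y))
        = - (1 - y') * (s / (y' - x')) + (1 - y) * (s / (y - x)) := by
    intro s x x' y y' h1 h2 h3 h4
    field_simp
    ring
  have can : ∀ s x y : F, y - x ≠ 0 → (1 - y) * (s / (y - x)) = (1 - x) * (s / (y - x)) - s := by
    intro s x y h
    field_simp
    ring
  have can2 : ∀ s x : F, 1 - x ≠ 0 → (1 - x) * (s / (1 - x)) = s := by
    intro s x h
    field_simp
  have can3 : ∀ s x : F, x ≠ 0 → x * (s / x) = s := by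
    intro s x h
    field_simp
  refine K3_zero (x := (a - a') / (1 - a)) (y := (b - b') / (1 - b)) (z := (c - c') / (1 - c))
    ?_ ?_ ?_ ?_
  · rw [gen0 _ _ _ a0 a0' a1, gen _ _ _ _ _ a1 b1 ab ab', gen _ _ _ _ _ a1 c1 ac ac']
    have k1 := can s34 a b ab
    have k2 := can s35 a c ac
    have k1' := can s34 a' b' ab'
    have k2' := can s35 a' c' ac'
    linear_combination (1 - a') * e3' - (1 - a) * e3 + k1 + k2 - k1' - k2' + can2 s36 a' a1'
      - can2 s36 a a1 + can3 s23 a' a0' - can3 s23 a a0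
  · have g := gen s34 a a' b b' a1 b1 ab ab'
    rw [gen0 _ _ _ b0 b0' b1, gen _ _ _ _ _ b1 c1 bc bc']
    have k1 := can s34 a b ab
    have k2 := can s45 b c bc
    have k1' := can s34 a' b' ab'
    have k2' := can s45 b' c' bc'
    linear_combination (1 - b') * e4' - (1 - b) * e4 + k2 - k2' + can2 s46 b' b1'
      - can2 s46 b b1 + can3 s24 b' b0' - can3 s24 b b0 - g
  · have g := gen s35 a a' c c' a1 c1 ac ac'
    have g2 := gen s45 b b' c c' b1 c1 bc bc'
    rw [gen0 _ _ _ c0 c0' c1]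
    linear_combination (1 - c') * e5' - (1 - c) * e5 + can2 s56 c' c1'
      - can2 s56 c c1 + can3 s25 c' c0' - can3 s25 c c0 - g - g2
  · rcases hne with h | h | h
    · exact Or.inl (div_ne_zero (sub_ne_zero.mpr h) a1)
    · exact Or.inr (Or.inl (div_ne_zero (sub_ne_zero.mpr h) b1))
    · exact Or.inr (Or.inr (div_ne_zero (sub_ne_zero.mpr h) c1))

def N3 {F : Type*} [Field F] (s23 s24 s25 s34 s35 s45 s36 s46 s56 a b c : F) : F :=
  K3 (s23 / a ^ 2 + s36 / (1 - a) ^ 2) (s24 / b ^ 2 + s46 / (1 - b) ^ 2)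
    (s25 / c ^ 2 + s56 / (1 - c) ^ 2) (s34 / (b - a) ^ 2) (s35 / (c - a) ^ 2) (s45 / (c - b) ^ 2)

theorem diag {F : Type*} [Field F] {s23 s24 s25 s34 s35 s45 s36 s46 s56 a b c : F}
    (h : SE s23 s24 s25 s34 s35 s45 s36 s46 s56 a b c) :
    K3 (s23 / a / (a / (1 - a))) (s24 / b / (b / (1 - b))) (s25 / c / (c / (1 - c)))
      (s34 / (b - a) / (b / (1 - b) - a / (1 - a)))
      (s35 / (c - a) / (c / (1 - c) - a / (1 - a)))
      (s45 / (c - b) / (c / (1 - c) - b / (1 - b))) =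
    ((1 - a) * (1 - b) * (1 - c)) ^ 2 * N3 s23 s24 s25 s34 s35 s45 s36 s46 s56 a b c := by
  obtain ⟨a0, b0, c0, a1, b1, c1, ab, ac, bc, e3, e4, e5⟩ := h
  have q1 : s34 / (b - a) / (b / (1 - b) - a / (1 - a)) =
      (1 - a) * (1 - b) * (s34 / (b - a) ^ 2) := by
    have : b / (1 - b) - a / (1 - a) = (b - a) / ((1 - a) * (1 - b)) := by field_simp; ring
    rw [this]; field_simp
  have q2 : s35 / (c - a) / (c / (1 - c) - a / (1 - a)) =
      (1 - a) * (1 - c) * (s35 / (c - a) ^ 2) := by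
    have : c / (1 - c) - a / (1 - a) = (c - a) / ((1 - a) * (1 - c)) := by field_simp; ring
    rw [this]; field_simp
  have q3 : s45 / (c - b) / (c / (1 - c) - b / (1 - b)) =
      (1 - b) * (1 - c) * (s45 / (c - b) ^ 2) := by
    have : c / (1 - c) - b / (1 - b) = (c - b) / ((1 - b) * (1 - c)) := by field_simp; ring
    rw [this]; field_simp
  have p : ∀ s x : F, x ≠ 0 → s / x ^ 2 * x = s / x := by
    intro s x h; field_simp
  have r0 : ∀ s x : F, x ≠ 0 → s / x / (x / (1 - x)) = (1 - x) * (s / x ^ 2) := by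
    intro s x h; field_simp
  rw [q1, q2, q3, r0 _ _ a0, r0 _ _ b0, r0 _ _ c0]
  unfold N3 K3
  have d1 : (1 - a) * (s23 / a ^ 2) + (1 - a) * (1 - b) * (s34 / (b - a) ^ 2) +
      (1 - a) * (1 - c) * (s35 / (c - a) ^ 2) = (1 - a) ^ 2 * (s23 / a ^ 2 + s36 / (1 - a) ^ 2 +
      s34 / (b - a) ^ 2 + s35 / (c - a) ^ 2) := by
    linear_combination (1 - a) * (e3 + p s23 _ a0 - p s34 _ ab - p s35 _ ac - p s36 _ a1)
  have d2 : (1 - b) * (s24 / b ^ 2) + (1 - a) * (1 - b) * (s34 / (b - a) ^ 2) +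
      (1 - b) * (1 - c) * (s45 / (c - b) ^ 2) = (1 - b) ^ 2 * (s24 / b ^ 2 + s46 / (1 - b) ^ 2 +
      s34 / (b - a) ^ 2 + s45 / (c - b) ^ 2) := by
    linear_combination (1 - b) * (e4 + p s24 _ b0 + p s34 _ ab - p s45 _ bc - p s46 _ b1)
  have d3 : (1 - c) * (s25 / c ^ 2) + (1 - a) * (1 - c) * (s35 / (c - a) ^ 2) +
      (1 - b) * (1 - c) * (s45 / (c - b) ^ 2) = (1 - c) ^ 2 * (s25 / c ^ 2 + s56 / (1 - c) ^ 2 +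
      s35 / (c - a) ^ 2 + s45 / (c - b) ^ 2) := by
    linear_combination (1 - c) * (e5 + p s25 _ c0 + p s35 _ ac + p s45 _ bc - p s56 _ c1)
  rw [d1, d2, d3]
  unfold D3
  ring

def d6 {F : Type*} [Field F] (s23 s34 s45 s56 s12 s16 s123 s234 s345 : F) : Fin 6 → F :=
  let a1 := 1 / s34 * (1 / (s12 * s56) + 1 / (s234 * s56) + 1 / (s16 * s234))
  let a2 := 1 / s45 * (1 / (s12 * s123) + 1 / (s23 * s123) + 1 / (s16 * s23))
  let a3 := 1 / (s34 * s345) * (1 / s12 + 1 / s16)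
  let a4 := 1 / (s45 * s345) * (1 / s12 + 1 / s16)
  ![1 / (s12 * s34 * s56) + 1 / (s12 * s56 * s123) + 1 / (s23 * s56 * s123) +
        1 / (s23 * s56 * s234) + 1 / (s34 * s56 * s234) + 1 / (s16 * s23 * s45) +
        1 / (s12 * s34 * s345) + 1 / (s12 * s45 * s123) + 1 / (s12 * s45 * s345) +
        1 / (s16 * s23 * s234) + 1 / (s16 * s34 * s234) + 1 / (s16 * s34 * s345) +
        1 / (s16 * s45 * s345) + 1 / (s23 * s45 * s123),
    -a1 - a3, -a2 - a4, -a4, -a3, a3 + a4]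

/-- expansion of the Parke-Taylor factor -/
theorem pt_expand {F : Type*} [Field F] {s23 s24 s25 s34 s35 s45 s36 s46 s56 a b c : F}
    (h : SE s23 s24 s25 s34 s35 s45 s36 s46 s56 a b c)
    (s12 s16 s123 s234 s345 : F)
    (hs12 : s12 = s34 + s35 + s36 + s45 + s46 + s56)
    (hs16 : s16 = s23 + s24 + s25 + s34 + s35 + s45)
    (hs123 : s123 = s45 + s46 + s56)
    (hs234 : s234 = s23 + s24 + s34)
    (hs345 : s345 = s34 + s35 + s45)
    (n12 : s12 ≠ 0) (n16 : s16 ≠ 0) (n123 : s123 ≠ 0) (n234 : s234 ≠ 0) (n345 : s345 ≠ 0)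
    (n23 : s23 ≠ 0) (n34 : s34 ≠ 0) (n45 : s45 ≠ 0) (n56 : s56 ≠ 0) :
    ∑ i, d6 s23 s34 s45 s56 s12 s16 s123 s234 s345 i *
      C6 (s23 / a) (s24 / b) (s25 / c) (s34 / (b - a)) (s35 / (c - a)) (s45 / (c - b)) i =
      1 / (a * (b - a) * (c - b) * (1 - c)) := by
  obtain ⟨a0, b0, c0, a1, b1, c1, ab, ac, bc, e3, e4, e5⟩ := h
  -- c0/s23 + c1/s34
  have G234 : s23 / a * (s24 / b + s34 / (b - a)) * (s56 / (1 - c)) / s23 +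
      s34 / (b - a) * (s23 / a + s24 / b) * (s56 / (1 - c)) / s34 =
      s234 * s56 / (a * (b - a) * (1 - c)) := by
    rw [hs234]; field_simp; ring
  have G345 : s34 / (b - a) * (s35 / (c - a) + s45 / (c - b)) * (s23 / a + s24 / b + s25 / c) / s34
      + s45 / (c - b) * (s34 / (b - a) + s35 / (c - a)) * (s23 / a + s24 / b + s25 / c) / s45 =
      s345 * (s23 / a + s24 / b + s25 / c) / ((b - a) * (c - b)) := by
    rw [hs345]
    generalize s23 / a + s24 / b + s25 / c = T
    field_simp; ring
  have G123 : s23 / a * (s24 / b + s34 / (b - a)) * (s56 / (1 - c)) / s56 +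
      s45 / (c - b) * (s23 / a) * (s24 / b + s34 / (b - a) + s25 / c + s35 / (c - a)) / s45 =
      s23 * s123 / (a * (c - b) * (1 - c)) := by
    have k1 : s24 / b + s34 / (b - a) = s46 / (1 - b) + s45 / (c - b) := by
      linear_combination e4
    have k2 : s46 / (1 - b) + s45 / (c - b) + s25 / c + s35 / (c - a) =
        s46 / (1 - b) + s56 / (1 - c) := by
      linear_combination e5
    rw [k1, k2, hs123]; field_simp; ring
  have G16 : s16 / (a * (b - a) * (c - b)) =
      (s25 / c + s35 / (c - a) + s45 / (c - b)) / (a * (b - a)) +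
      (1 / (c - b) * (1 / a) * (s24 / b + s34 / (b - a) + s25 / c + s35 / (c - a))) +
      (s23 / a + s24 / b + s25 / c) / ((b - a) * (c - b)) := by
    rw [hs16]; field_simp; ring
  have E12 : s12 = s23 / a + s24 / b + s25 / c - s23 - s24 - s25 := by
    have p1 : s23 / a * a = s23 := div_mul_cancel₀ _ a0
    have p2 : s24 / b * b = s24 := div_mul_cancel₀ _ b0
    have p3 : s25 / c * c = s25 := div_mul_cancel₀ _ c0
    have p4 : s34 / (b - a) * (b - a) = s34 := div_mul_cancel₀ _ ab
    have p5 : s35 / (c - a) * (c - a) = s35 := div_mul_cancel₀ _ ac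
    have p6 : s45 / (c - b) * (c - b) = s45 := div_mul_cancel₀ _ bc
    have p7 : s36 / (1 - a) * (1 - a) = s36 := div_mul_cancel₀ _ a1
    have p8 : s46 / (1 - b) * (1 - b) = s46 := div_mul_cancel₀ _ b1
    have p9 : s56 / (1 - c) * (1 - c) = s56 := div_mul_cancel₀ _ c1
    rw [hs12]
    linear_combination -p1 - p2 - p3 - p4 - p5 - p6 - p7 - p8 - p9 - (1 - a) * e3 - (1 - b) * e4
      - (1 - c) * e5
  have G12 : s12 / ((b - a) * (c - b) * (1 - c)) =
      s23 / (a * (c - b) * (1 - c)) + 1 / (b - a) * (s23 / a + s24 / b) / (1 - c) +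
      (s23 / a + s24 / b + s25 / c) / ((b - a) * (c - b)) := by
    rw [E12]; field_simp; ring
  have hd : ∑ i, d6 s23 s34 s45 s56 s12 s16 s123 s234 s345 i *
      C6 (s23 / a) (s24 / b) (s25 / c) (s34 / (b - a)) (s35 / (c - a)) (s45 / (c - b)) i =
      1 / (a * (b - a) * (c - b)) + 1 / (a * (b - a) * (1 - c)) + 1 / (a * (c - b) * (1 - c)) +
      1 / ((b - a) * (c - b) * (1 - c)) := by
    have H16 : 1 / (a * (b - a) * (c - b)) = 1 / s16 * (s16 / (a * (b - a) * (c - b))) := by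
      field_simp
    have H12 : 1 / ((b - a) * (c - b) * (1 - c)) =
        1 / s12 * (s12 / ((b - a) * (c - b) * (1 - c))) := by
      field_simp
    have H234 : 1 / (a * (b - a) * (1 - c)) =
        1 / (s234 * s56) * (s234 * s56 / (a * (b - a) * (1 - c))) := by
      field_simp
    have H123 : 1 / (a * (c - b) * (1 - c)) =
        1 / (s23 * s123) * (s23 * s123 / (a * (c - b) * (1 - c))) := by
      field_simp
    have Q1 : s23 / (a * (c - b) * (1 - c)) = 1 / s123 * (s23 * s123 / (a * (c - b) * (1 - c))) := by
      field_simp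
    have Q2 : (s23 / a + s24 / b + s25 / c) / ((b - a) * (c - b)) = 1 / s345 *
        (s345 * (s23 / a + s24 / b + s25 / c) / ((b - a) * (c - b))) := by
      field_simp
    have Q3 : s56 / (1 - c) / (a * (b - a)) = 1 / s234 *
        (s234 * s56 / (a * (b - a) * (1 - c))) := by
      field_simp
    have Q4 : 1 / (c - b) * (1 / a) * (s24 / b + s34 / (b - a) + s25 / c + s35 / (c - a)) =
       1 / (s45 * s23) * (s45 / (c - b) * (s23 / a) *
        (s24 / b + s34 / (b - a) + s25 / c + s35 / (c - a))) := by
      generalize s24 / b + s34 / (b - a) + s25 / c + s35 / (c - a) = Z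
      field_simp
    have Q5 : 1 / (b - a) * (s23 / a + s24 / b) / (1 - c) = 1 / (s34 * s56) *
        (s34 / (b - a) * (s23 / a + s24 / b) * (s56 / (1 - c))) := by
      generalize s23 / a + s24 / b = Z
      field_simp
    rw [H16, H12, H234, H123, G16, G12, e5, Q4, Q5, Q3, Q2, Q1, ← G123, ← G234, ← G345]
    simp only [Fin.sum_univ_succ, Fin.sum_univ_zero, d6, C6, Matrix.cons_val_zero,
      Matrix.cons_val_succ]
    rw [← e5]
    generalize s23 / a = t23
    generalize s24 / b = t24
    generalize s25 / c = t25
    generalize s34 / (b - a) = t34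
    generalize s35 / (c - a) = t35
    generalize s45 / (c - b) = t45
    simp only [div_eq_mul_inv, mul_inv, one_mul]
    generalize s12⁻¹ = i12
    generalize s16⁻¹ = i16
    generalize s123⁻¹ = i123
    generalize s234⁻¹ = i234
    generalize s345⁻¹ = i345
    generalize s23⁻¹ = i23
    generalize s34⁻¹ = i34
    generalize s45⁻¹ = i45
    generalize s56⁻¹ = i56
    ring
  rw [hd]
  field_simp
  ring

theorem K3_pos {w23 w24 w25 w34 w35 w45 : ℝ} (h1 : 0 < w23) (h2 : 0 < w24) (h3 : 0 < w25)
    (h4 : 0 < w34) (h5 : 0 < w35) (h6 : 0 < w45) : 0 < K3 w23 w24 w25 w34 w35 w45 := by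
  have : K3 w23 w24 w25 w34 w35 w45 = w23 * w24 * w25 + w23 * w24 * (w35 + w45) +
      w23 * w25 * (w34 + w45) + w24 * w25 * (w34 + w35) +
      (w23 + w24 + w25) * (w34 * w35 + w34 * w45 + w35 * w45) := by
    unfold K3 D3; ring
  rw [this]; positivity

theorem im_aux {s23 s34 s35 s36 : ℝ} (h23 : 0 < s23) (h34 : 0 < s34) (h35 : 0 < s35)
    (h36 : 0 < s36) {a b c : ℂ} (ha : a ≠ 0)
    (e : (s23 : ℂ) / a + s34 / (a - b) + s35 / (a - c) = s36 / (1 - a))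
    (hb : b.im ≤ a.im) (hc : c.im ≤ a.im) : a.im ≤ 0 := by
  by_contra hpos
  push Not at hpos
  have key : ∀ (s : ℝ) (z : ℂ), ((s : ℂ) / z).im = - (s * z.im / Complex.normSq z) := by
    intro s z
    rw [Complex.div_im]; simp
  have hi := congrArg Complex.im e
  simp only [Complex.add_im, key, Complex.sub_im, Complex.one_im] at hi
  have n1 : 0 < s23 * a.im / Complex.normSq a :=
    div_pos (mul_pos h23 hpos) (Complex.normSq_pos.mpr ha)
  have n2 : 0 ≤ s34 * (a.im - b.im) / Complex.normSq (a - b) :=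
    div_nonneg (mul_nonneg h34.le (sub_nonneg.mpr hb)) (Complex.normSq_nonneg _)
  have n3 : 0 ≤ s35 * (a.im - c.im) / Complex.normSq (a - c) :=
    div_nonneg (mul_nonneg h35.le (sub_nonneg.mpr hc)) (Complex.normSq_nonneg _)
  have n4 : 0 ≤ s36 * a.im / Complex.normSq (1 - a) :=
    div_nonneg (mul_nonneg h36.le hpos.le) (Complex.normSq_nonneg _)
  have : s36 * (0 - a.im) / Complex.normSq (1 - a) = - (s36 * a.im / Complex.normSq (1 - a)) := by
    ring
  rw [this] at hi
  linarith

theorem SE.im_nonpos {s23 s24 s25 s34 s35 s45 s36 s46 s56 : ℝ}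
    (h23 : 0 < s23) (h24 : 0 < s24) (h25 : 0 < s25) (h34 : 0 < s34)
    (h35 : 0 < s35) (h45 : 0 < s45) (h36 : 0 < s36) (h46 : 0 < s46)
    (h56 : 0 < s56) {a b c : ℂ}
    (h : SE (s23 : ℂ) s24 s25 s34 s35 s45 s36 s46 s56 a b c) :
    a.im ≤ 0 ∧ b.im ≤ 0 ∧ c.im ≤ 0 := by
  have f : ∀ (s x y : ℂ), s / (x - y) = - (s / (y - x)) := by
    intro s x y; rw [← neg_sub, div_neg]
  have k3 := im_aux h23 h34 h35 h36 (b := b) (c := c) h.a0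
    (by rw [← h.e3, f _ a b, f _ a c]; ring)
  have k4 := im_aux h24 h34 h45 h46 (b := a) (c := c) h.b0
    (by rw [← h.e4, f _ b c]; ring)
  have k5 := im_aux h25 h35 h45 h56 (b := a) (c := b) h.c0 (by rw [← h.e5])
  rcases le_total a.im b.im with h1 | h1 <;> rcases le_total b.im c.im with h2 | h2 <;>
    rcases le_total a.im c.im with h3 | h3
  · have := k5 h3 h2; exact ⟨by linarith, by linarith, this⟩
  · have := k5 (h1.trans h2) h2; exact ⟨by linarith, by linarith, this⟩
  · have := k4 h1 h2; exact ⟨by linarith, by linarith, by linarith⟩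
  · have := k4 h1 h2; exact ⟨by linarith, by linarith, by linarith⟩
  · have := k5 h3 h2; exact ⟨by linarith, by linarith, this⟩
  · have := k3 h1 h3; exact ⟨by linarith, by linarith, by linarith⟩
  · have := k3 h1 (h2.trans h1); exact ⟨by linarith, by linarith, by linarith⟩
  · have := k3 h1 h3; exact ⟨by linarith, by linarith, by linarith⟩

theorem SE.map {F G : Type*} [Field F] [Field G] (f : F →+* G)
    {s23 s24 s25 s34 s35 s45 s36 s46 s56 a b c : F}
    (h : SE s23 s24 s25 s34 s35 s45 s36 s46 s56 a b c) :
    SE (f s23) (f s24) (f s25) (f s34) (f s35) (f s45) (f s36) (f s46) (f s56)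
      (f a) (f b) (f c) where
  a0 := (map_ne_zero f).mpr h.a0
  b0 := (map_ne_zero f).mpr h.b0
  c0 := (map_ne_zero f).mpr h.c0
  a1 := by rw [← map_one f, ← map_sub]; exact (map_ne_zero f).mpr h.a1
  b1 := by rw [← map_one f, ← map_sub]; exact (map_ne_zero f).mpr h.b1
  c1 := by rw [← map_one f, ← map_sub]; exact (map_ne_zero f).mpr h.c1
  ab := by rw [← map_sub]; exact (map_ne_zero f).mpr h.ab
  ac := by rw [← map_sub]; exact (map_ne_zero f).mpr h.ac
  bc := by rw [← map_sub]; exact (map_ne_zero f).mpr h.bc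
  e3 := by simpa using congrArg f h.e3
  e4 := by simpa using congrArg f h.e4
  e5 := by simpa using congrArg f h.e5

theorem SE.im_zero {s23 s24 s25 s34 s35 s45 s36 s46 s56 : ℝ}
    (h23 : 0 < s23) (h24 : 0 < s24) (h25 : 0 < s25) (h34 : 0 < s34)
    (h35 : 0 < s35) (h45 : 0 < s45) (h36 : 0 < s36) (h46 : 0 < s46)
    (h56 : 0 < s56) {a b c : ℂ}
    (h : SE (s23 : ℂ) s24 s25 s34 s35 s45 s36 s46 s56 a b c) :
    a.im = 0 ∧ b.im = 0 ∧ c.im = 0 := by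
  obtain ⟨h1, h2, h3⟩ := h.im_nonpos h23 h24 h25 h34 h35 h45 h36 h46 h56
  have h' := h.map (starRingEnd ℂ)
  simp only [Complex.conj_ofReal] at h'
  obtain ⟨g1, g2, g3⟩ := h'.im_nonpos h23 h24 h25 h34 h35 h45 h36 h46 h56
  simp only [Complex.conj_im] at g1 g2 g3
  exact ⟨by linarith, by linarith, by linarith⟩

theorem SE.N3_ne {s23 s24 s25 s34 s35 s45 s36 s46 s56 : ℝ}
    (h23 : 0 < s23) (h24 : 0 < s24) (h25 : 0 < s25) (h34 : 0 < s34)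
    (h35 : 0 < s35) (h45 : 0 < s45) (h36 : 0 < s36) (h46 : 0 < s46)
    (h56 : 0 < s56) {a b c : ℂ}
    (h : SE (s23 : ℂ) s24 s25 s34 s35 s45 s36 s46 s56 a b c) :
    N3 (s23 : ℂ) s24 s25 s34 s35 s45 s36 s46 s56 a b c ≠ 0 := by
  obtain ⟨h1, h2, h3⟩ := h.im_zero h23 h24 h25 h34 h35 h45 h36 h46 h56
  obtain ⟨a, rfl⟩ : ∃ x : ℝ, (x : ℂ) = a := ⟨a.re, Complex.ext (by simp) (by simp [h1])⟩
  obtain ⟨b, rfl⟩ : ∃ x : ℝ, (x : ℂ) = b := ⟨b.re, Complex.ext (by simp) (by simp [h2])⟩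
  obtain ⟨c, rfl⟩ : ∃ x : ℝ, (x : ℂ) = c := ⟨c.re, Complex.ext (by simp) (by simp [h3])⟩
  obtain ⟨a0, b0, c0, a1, b1, c1, ab, ac, bc, e3, e4, e5⟩ := h
  norm_cast at a0 b0 c0 a1 b1 c1 ab ac bc
  have : N3 (s23 : ℂ) s24 s25 s34 s35 s45 s36 s46 s56 a b c =
      ((N3 s23 s24 s25 s34 s35 s45 s36 s46 s56 a b c : ℝ) : ℂ) := by
    unfold N3 K3 D3; push_cast; rfl
  rw [this]
  norm_cast
  unfold N3
  apply ne_of_gt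
  apply K3_pos <;> positivity
theorem SE_exists {s23 s24 s25 s34 s35 s45 s36 s46 s56 : ℝ}
    (h23 : 0 < s23) (h24 : 0 < s24) (h25 : 0 < s25) (h34 : 0 < s34)
    (h35 : 0 < s35) (h45 : 0 < s45) (h36 : 0 < s36) (h46 : 0 < s46)
    (h56 : 0 < s56) : ∃ a b c : ℝ, a < b ∧ b < c ∧
      SE s23 s24 s25 s34 s35 s45 s36 s46 s56 a b c := by
  let f : ℝ × ℝ × ℝ → ℝ := fun p => p.1 ^ s23 * p.2.1 ^ s24 * p.2.2 ^ s25 *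
    (p.2.1 - p.1) ^ s34 * (p.2.2 - p.1) ^ s35 * (p.2.2 - p.2.1) ^ s45 *
    (1 - p.1) ^ s36 * (1 - p.2.1) ^ s46 * (1 - p.2.2) ^ s56
  let Lf : ℝ → ℝ → ℝ → ℝ := fun a b c => s23 * Real.log a + s24 * Real.log b + s25 * Real.log c +
    s34 * Real.log (b - a) + s35 * Real.log (c - a) + s45 * Real.log (c - b) +
    s36 * Real.log (1 - a) + s46 * Real.log (1 - b) + s56 * Real.log (1 - c)
  have hfL : ∀ a b c : ℝ, 0 < a → a < b → b < c → c < 1 → f (a, b, c) = Real.exp (Lf a b c) := by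
    intro a b c h1 h2 h3 h4
    simp only [f, Lf]
    rw [Real.rpow_def_of_pos (by linarith), Real.rpow_def_of_pos (by linarith),
      Real.rpow_def_of_pos (by linarith), Real.rpow_def_of_pos (by linarith),
      Real.rpow_def_of_pos (by linarith), Real.rpow_def_of_pos (by linarith),
      Real.rpow_def_of_pos (by linarith), Real.rpow_def_of_pos (by linarith),
      Real.rpow_def_of_pos (by linarith)]
    simp only [← Real.exp_add]
    congr 1
    ring
  have hc : ∀ s : ℝ, 0 < s → Continuous fun x : ℝ => x ^ s := fun s hs =>
    Real.continuous_rpow_const hs.le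
  have hf : Continuous f := by
    have g1 : Continuous fun p : ℝ × ℝ × ℝ => p.1 := continuous_fst
    have g2 : Continuous fun p : ℝ × ℝ × ℝ => p.2.1 := continuous_fst.comp continuous_snd
    have g3 : Continuous fun p : ℝ × ℝ × ℝ => p.2.2 := continuous_snd.comp continuous_snd
    exact (((((((((hc _ h23).comp g1).mul ((hc _ h24).comp g2)).mul ((hc _ h25).comp g3)).mul
      ((hc _ h34).comp (g2.sub g1))).mul ((hc _ h35).comp (g3.sub g1))).mul
      ((hc _ h45).comp (g3.sub g2))).mul ((hc _ h36).comp (continuous_const.sub g1))).mul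
      ((hc _ h46).comp (continuous_const.sub g2))).mul ((hc _ h56).comp (continuous_const.sub g3))
  let K : Set (ℝ × ℝ × ℝ) := {p | 0 ≤ p.1 ∧ p.1 ≤ p.2.1 ∧ p.2.1 ≤ p.2.2 ∧ p.2.2 ≤ 1}
  have hK : IsCompact K := by
    have hsub : K ⊆ Set.Icc 0 1 ×ˢ (Set.Icc 0 1 ×ˢ Set.Icc 0 1) := by
      rintro ⟨a, b, c⟩ ⟨h1, h2, h3, h4⟩
      simp only [Set.mem_prod, Set.mem_Icc]
      simp only at h1 h2 h3 h4
      refine ⟨⟨?_, ?_⟩, ⟨?_, ?_⟩, ?_, ?_⟩ <;> linarith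
    refine IsCompact.of_isClosed_subset
      (isCompact_Icc.prod (isCompact_Icc.prod isCompact_Icc)) ?_ hsub
    have g1 : Continuous fun p : ℝ × ℝ × ℝ => p.1 := continuous_fst
    have g2 : Continuous fun p : ℝ × ℝ × ℝ => p.2.1 := continuous_fst.comp continuous_snd
    have g3 : Continuous fun p : ℝ × ℝ × ℝ => p.2.2 := continuous_snd.comp continuous_snd
    exact (isClosed_le continuous_const g1).inter ((isClosed_le g1 g2).inter
      ((isClosed_le g2 g3).inter (isClosed_le g3 continuous_const)))
  have hm : ((1 / 4, 1 / 2, 3 / 4) : ℝ × ℝ × ℝ) ∈ K := by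
    refine ⟨?_, ?_, ?_, ?_⟩ <;> norm_num
  obtain ⟨⟨a, b, c⟩, hpK, hmax⟩ := hK.exists_isMaxOn ⟨_, hm⟩ hf.continuousOn
  have hmax' : ∀ q ∈ K, f q ≤ f (a, b, c) := fun q hq => hmax hq
  have hpos : 0 < f (a, b, c) := by
    refine lt_of_lt_of_le ?_ (hmax' _ hm)
    rw [hfL _ _ _ (by norm_num) (by norm_num) (by norm_num) (by norm_num)]
    exact Real.exp_pos _
  obtain ⟨p1, p2, p3, p4⟩ := hpK
  simp only at p1 p2 p3 p4
  have hne := hpos.ne'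
  simp only [f, mul_ne_zero_iff] at hne
  obtain ⟨⟨⟨⟨⟨⟨⟨⟨n1, n2⟩, n3⟩, n4⟩, n5⟩, n6⟩, n7⟩, n8⟩, n9⟩ := hne
  have nz : ∀ x s : ℝ, 0 < s → x ^ s ≠ 0 → x ≠ 0 := by
    intro x s hs h hx
    rw [hx, Real.zero_rpow hs.ne'] at h
    exact h rfl
  have l1 : 0 < a := lt_of_le_of_ne p1 (nz _ _ h23 n1).symm
  have l2 : a < b := lt_of_le_of_ne p2 (fun h => nz _ _ h34 n4 (by rw [h]; ring))
  have l3 : b < c := lt_of_le_of_ne p3 (fun h => nz _ _ h45 n6 (by rw [h]; ring))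
  have l4 : c < 1 := lt_of_le_of_ne p4 (fun h => nz _ _ h56 n9 (by rw [h]; ring))
  have hL : ∀ a' b' c' : ℝ, 0 < a' → a' < b' → b' < c' → c' < 1 → Lf a' b' c' ≤ Lf a b c := by
    intro a' b' c' k1 k2 k3 k4
    have := hmax' (a', b', c') ⟨k1.le, k2.le, k3.le, k4.le⟩
    rw [hfL _ _ _ k1 k2 k3 k4, hfL _ _ _ l1 l2 l3 l4] at this
    exact Real.exp_le_exp.mp this
  have dlog : ∀ s t : ℝ, t ≠ 0 → HasDerivAt (fun x => s * Real.log x) (s / t) t := by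
    intro s t ht
    simpa [div_eq_mul_inv] using (Real.hasDerivAt_log ht).const_mul s
  have dlog1 : ∀ s k t : ℝ, k - t ≠ 0 →
      HasDerivAt (fun x => s * Real.log (k - x)) (-(s / (k - t))) t := by
    intro s k t ht
    have := (((hasDerivAt_id t).const_sub k).log ht).const_mul s
    exact this.congr_deriv (by simp only [id_eq]; ring)
  have dlog2 : ∀ s k t : ℝ, t - k ≠ 0 →
      HasDerivAt (fun x => s * Real.log (x - k)) (s / (t - k)) t := by
    intro s k t ht
    have := (((hasDerivAt_id t).sub_const k).log ht).const_mul s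
    exact this.congr_deriv (by simp only [id_eq]; ring)
  have dc : ∀ s k t : ℝ, HasDerivAt (fun _ : ℝ => s * Real.log k) 0 t :=
    fun s k t => hasDerivAt_const _ _
  have na : a ≠ 0 := by linarith
  have nb : b ≠ 0 := by linarith
  have nc : c ≠ 0 := by linarith
  have na1 : 1 - a ≠ 0 := by linarith
  have nb1 : 1 - b ≠ 0 := by linarith
  have nc1 : 1 - c ≠ 0 := by linarith
  have nab : b - a ≠ 0 := by linarith
  have nac : c - a ≠ 0 := by linarith
  have nbc : c - b ≠ 0 := by linarith
  refine ⟨a, b, c, l2, l3, na, nb, nc, na1, nb1, nc1, nab, nac, nbc, ?_, ?_, ?_⟩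
  · have hd : HasDerivAt (fun x => Lf x b c) _ a :=
      ((((((((dlog s23 a na).add (dc s24 b a)).add (dc s25 c a)).add (dlog1 s34 b a nab)).add
      (dlog1 s35 c a nac)).add (dc s45 (c - b) a)).add (dlog1 s36 1 a na1)).add
      (dc s46 (1 - b) a)).add (dc s56 (1 - c) a)
    have hl : IsLocalMax (fun x => Lf x b c) a := by
      filter_upwards [Ioo_mem_nhds l1 l2] with x hx
      exact hL x b c hx.1 hx.2 l3 l4
    have := hl.hasDerivAt_eq_zero hd
    linarith
  · have hd : HasDerivAt (fun x => Lf a x c) _ b :=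
      ((((((((dc s23 a b).add (dlog s24 b nb)).add (dc s25 c b)).add (dlog2 s34 a b nab)).add
      (dc s35 (c - a) b)).add (dlog1 s45 c b nbc)).add (dc s36 (1 - a) b)).add
      (dlog1 s46 1 b nb1)).add (dc s56 (1 - c) b)
    have hl : IsLocalMax (fun x => Lf a x c) b := by
      filter_upwards [Ioo_mem_nhds l2 l3] with x hx
      exact hL a x c l1 hx.1 hx.2 l4
    have := hl.hasDerivAt_eq_zero hd
    linarith
  · have hd : HasDerivAt (fun x => Lf a b x) _ c :=
      ((((((((dc s23 a c).add (dc s24 b c)).add (dlog s25 c nc)).add (dc s34 (b - a) c)).add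
      (dlog2 s35 a c nac)).add (dlog2 s45 b c nbc)).add (dc s36 (1 - a) c)).add
      (dc s46 (1 - b) c)).add (dlog1 s56 1 c nc1)
    have hl : IsLocalMax (fun x => Lf a b x) c := by
      filter_upwards [Ioo_mem_nhds l3 l4] with x hx
      exact hL a b x l1 l2 hx.1 hx.2
    have := hl.hasDerivAt_eq_zero hd
    linarith

/-- six real solutions -/
theorem SE_six {s23 s24 s25 s34 s35 s45 s36 s46 s56 : ℝ}
    (h23 : 0 < s23) (h24 : 0 < s24) (h25 : 0 < s25) (h34 : 0 < s34)
    (h35 : 0 < s35) (h45 : 0 < s45) (h36 : 0 < s36) (h46 : 0 < s46)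
    (h56 : 0 < s56) : ∃ p : Fin 6 → ℝ × ℝ × ℝ, Function.Injective p ∧
      ∀ i, SE s23 s24 s25 s34 s35 s45 s36 s46 s56 (p i).1 (p i).2.1 (p i).2.2 := by
  -- orders 345, 435, 354, 453, 534, 543
  obtain ⟨a1, b1, c1, x1, y1, g1⟩ := SE_exists h23 h24 h25 h34 h35 h45 h36 h46 h56
  obtain ⟨b2, a2, c2, x2, y2, g2⟩ := SE_exists h24 h23 h25 h34 h45 h35 h46 h36 h56
  obtain ⟨a3, c3, b3, x3, y3, g3⟩ := SE_exists h23 h25 h24 h35 h34 h45 h36 h56 h46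
  obtain ⟨b4, c4, a4, x4, y4, g4⟩ := SE_exists h24 h25 h23 h45 h34 h35 h46 h56 h36
  obtain ⟨c5, a5, b5, x5, y5, g5⟩ := SE_exists h25 h23 h24 h35 h45 h34 h56 h36 h46
  obtain ⟨c6, b6, a6, x6, y6, g6⟩ := SE_exists h25 h24 h23 h45 h35 h34 h56 h46 h36
  refine ⟨![(a1, b1, c1), (a2, b2, c2), (a3, b3, c3), (a4, b4, c4), (a5, b5, c5), (a6, b6, c6)],
    ?_, ?_⟩
  · intro i j hij
    fin_cases i <;> fin_cases j <;> first
      | rfl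
      | (exfalso
         simp [Prod.ext_iff] at hij
         obtain ⟨q1, q2, q3⟩ := hij
         linarith)
  · intro i
    fin_cases i
    · exact g1
    · exact g2.swap12
    · exact g3.swap23
    · exact g4.swap23.swap12
    · exact g5.swap12.swap23
    · exact g6.swap12.swap23.swap12
def Ymap (p : ℂ × ℂ × ℂ) : Fin 3 → ℂ :=
  ![p.1 / (1 - p.2.2), (p.2.1 - p.1) / (1 - p.2.2), (p.2.2 - p.2.1) / (1 - p.2.2)]

theorem Ymap_inj {p q : ℂ × ℂ × ℂ} (hp : 1 - p.2.2 ≠ 0) (hq : 1 - q.2.2 ≠ 0)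
    (h : Ymap p = Ymap q) : p = q := by
  obtain ⟨a, b, c⟩ := p
  obtain ⟨a', b', c'⟩ := q
  simp only at hp hq
  have h0 := congrFun h 0
  have h1 := congrFun h 1
  have h2 := congrFun h 2
  simp only [Ymap, Matrix.cons_val] at h0 h1 h2
  have e : ∀ x y : ℂ, 1 - y ≠ 0 → x / (1 - y) = x * (1 - y)⁻¹ := fun x y _ => div_eq_mul_inv _ _
  have hs : 1 / (1 - c) = 1 / (1 - c') := by
    have k : ∀ x y z : ℂ, 1 - z ≠ 0 → 1 / (1 - z) = 1 + x / (1 - z) + (y - x) / (1 - z)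
      + (z - y) / (1 - z) := by
      intro x y z hz; field_simp; ring
    rw [k a b c hp, k a' b' c' hq, h0, h1, h2]
  have hc : c = c' := by
    have := congrArg (fun x => 1 / x) hs
    simp only [one_div, inv_inv] at this
    linear_combination -this
  subst hc
  have m0 : a = a' := by
    field_simp at h0; exact h0
  subst m0
  have m1 : b = b' := by
    field_simp at h1; linear_combination h1
  subst m1
  rfl

theorem crit_iff (s23 s24 s25 s34 s35 s45 s36 s46 s56 : ℝ) (y : Fin 3 → ℂ) :
    y ∈ amp6Crit (amp6Coeff s23 s24 s25 s34 s35 s45 s36 s46 s56) ↔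
    (y 0 ≠ 0 ∧ y 1 ≠ 0 ∧ y 2 ≠ 0 ∧ y 0 + y 1 ≠ 0 ∧ y 0 + y 1 + y 2 ≠ 0 ∧ y 1 + y 2 ≠ 0 ∧
      1 + (y 1 + y 2) ≠ 0 ∧ 1 + y 2 ≠ 0 ∧ 1 + (y 0 + y 1 + y 2) ≠ 0) ∧
    (s23 / y 0 + s24 / (y 0 + y 1) + s25 / (y 0 + y 1 + y 2) -
      (s23 + s24 + s25 + s34 + s35 + s45 + s36 + s46 + s56) / (1 + (y 0 + y 1 + y 2)) = 0) ∧
    (s34 / y 1 + s24 / (y 0 + y 1) + s25 / (y 0 + y 1 + y 2) + s35 / (y 1 + y 2) +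
      s36 / (1 + (y 1 + y 2)) -
      (s23 + s24 + s25 + s34 + s35 + s45 + s36 + s46 + s56) / (1 + (y 0 + y 1 + y 2)) = 0) ∧
    (s45 / y 2 + s25 / (y 0 + y 1 + y 2) + s35 / (y 1 + y 2) +
      s36 / (1 + (y 1 + y 2)) + s46 / (1 + y 2) -
      (s23 + s24 + s25 + s34 + s35 + s45 + s36 + s46 + s56) / (1 + (y 0 + y 1 + y 2)) = 0) := by
  have r1 : ∀ P : Fin 9 → Prop, (∀ a, P a) ↔
      (P 0 ∧ P 1 ∧ P 2 ∧ P 3 ∧ P 4 ∧ P 5 ∧ P 6 ∧ P 7 ∧ P 8) := by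
    intro P
    constructor
    · intro h; exact ⟨h _, h _, h _, h _, h _, h _, h _, h _, h _⟩
    · rintro ⟨h0, h1, h2, h3, h4, h5, h6, h7, h8⟩ a
      fin_cases a <;> assumption
  have r2 : ∀ P : Fin 3 → Prop, (∀ a, P a) ↔ (P 0 ∧ P 1 ∧ P 2) := by
    intro P
    constructor
    · intro h; exact ⟨h _, h _, h _⟩
    · rintro ⟨h0, h1, h2⟩ a
      fin_cases a <;> assumption
  have sum9 : ∀ f : Fin 9 → ℂ, ∑ a, f a =
      f 0 + f 1 + f 2 + f 3 + f 4 + f 5 + f 6 + f 7 + f 8 := by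
    intro f
    simp only [Fin.sum_univ_succ, Fin.sum_univ_zero]
    simp only [← add_assoc, add_zero]
    rfl
  unfold amp6Crit
  rw [Set.mem_ofPred_eq, r1, r2]
  simp only [sum9]
  simp [amp6L, amp6Const, amp6Lin, amp6Coeff, Fin.sum_univ_three]
  intro _ _ _ _ _ _ _ _ _
  refine and_congr ?_ (and_congr ?_ ?_) <;> constructor <;> intro h <;> rw [← h] <;> ring

theorem crit_eq_image (s23 s24 s25 s34 s35 s45 s36 s46 s56 : ℝ) :
    amp6Crit (amp6Coeff s23 s24 s25 s34 s35 s45 s36 s46 s56) =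
    Ymap '' {p | SE (s23 : ℂ) s24 s25 s34 s35 s45 s36 s46 s56 p.1 p.2.1 p.2.2} := by
  have key : ∀ a b c : ℂ, 1 - c ≠ 0 →
      (Ymap (a, b, c) ∈ amp6Crit (amp6Coeff s23 s24 s25 s34 s35 s45 s36 s46 s56) ↔
        SE (s23 : ℂ) s24 s25 s34 s35 s45 s36 s46 s56 a b c) := by
    intro a b c hc
    rw [crit_iff]
    simp only [Ymap, Matrix.cons_val]
    have f1 : a / (1 - c) + (b - a) / (1 - c) = b / (1 - c) := by field_simp; ring
    have f2 : b / (1 - c) + (c - b) / (1 - c) = c / (1 - c) := by field_simp; ring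
    have f3 : (b - a) / (1 - c) + (c - b) / (1 - c) = (c - a) / (1 - c) := by field_simp; ring
    have f4 : 1 + (c - a) / (1 - c) = (1 - a) / (1 - c) := by field_simp; ring
    have f5 : 1 + (c - b) / (1 - c) = (1 - b) / (1 - c) := by field_simp; ring
    have f6 : 1 + c / (1 - c) = 1 / (1 - c) := by field_simp; ring
    rw [f1, f2, f3, f4, f5, f6]
    have dd : ∀ s x : ℂ, s / (x / (1 - c)) = (1 - c) * (s / x) := by
      intro s x; rw [div_div_eq_mul_div]; ring
    simp only [dd, div_one]
    have p : ∀ s x : ℂ, x ≠ 0 → s / x * x = s := fun s x h => div_mul_cancel₀ _ h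
    constructor
    · rintro ⟨⟨n1, n2, n3, n4, n5, n6, n7, n8, n9⟩, k1, k2, k3⟩
      simp only [ne_eq, div_eq_zero_iff, not_or] at n1 n2 n3 n4 n5 n6 n7 n8
      have p1 := p s23 a n1.1
      have p2 := p s24 b n4.1
      have p3 := p s25 c n5.1
      have p4 := p s34 (b - a) n2.1
      have p5 := p s35 (c - a) n6.1
      have p6 := p s45 (c - b) n3.1
      have p7 := p s36 (1 - a) n7.1
      have p8 := p s46 (1 - b) n8.1
      have p9 := p s56 (1 - c) hc
      have g1 : (s23 : ℂ) / a - s34 / (b - a) - s35 / (c - a) - s36 / (1 - a) = 0 := by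
        apply mul_left_cancel₀ hc
        linear_combination k1 - k2
      have g2 : (s24 : ℂ) / b + s34 / (b - a) - s45 / (c - b) - s46 / (1 - b) = 0 := by
        apply mul_left_cancel₀ hc
        linear_combination k2 - k3
      have g3 : (s25 : ℂ) / c + s35 / (c - a) + s45 / (c - b) - s56 / (1 - c) = 0 := by
        apply mul_left_cancel₀ hc
        apply mul_left_cancel₀ hc
        linear_combination k3 + (1 - c) * (a * g1 + b * g2 -
          (p1 + p2 + p3 + p4 + p5 + p6 + p7 + p8 + p9))
      exact ⟨n1.1, n4.1, n5.1, n7.1, n8.1, hc, n2.1, n6.1, n3.1, by linear_combination g1,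
        by linear_combination g2, by linear_combination g3⟩
    · rintro ⟨a0, b0, c0, a1, b1, c1, ab, ac, bc, e3, e4, e5⟩
      have p1 := p s23 a a0
      have p2 := p s24 b b0
      have p3 := p s25 c c0
      have p4 := p s34 (b - a) ab
      have p5 := p s35 (c - a) ac
      have p6 := p s45 (c - b) bc
      have p7 := p s36 (1 - a) a1
      have p8 := p s46 (1 - b) b1
      have p9 := p s56 (1 - c) c1
      refine ⟨⟨div_ne_zero a0 hc, div_ne_zero ab hc, div_ne_zero bc hc, div_ne_zero b0 hc,
        div_ne_zero c0 hc, div_ne_zero ac hc, div_ne_zero a1 hc, div_ne_zero b1 hc,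
        div_ne_zero one_ne_zero hc⟩, ?_, ?_, ?_⟩
      · linear_combination (1 - c) * ((1 - a) * e3 + (1 - b) * e4 + (1 - c) * e5 +
          (p1 + p2 + p3 + p4 + p5 + p6 + p7 + p8 + p9))
      · linear_combination (1 - c) * (- a * e3 + (1 - b) * e4 + (1 - c) * e5 +
          (p1 + p2 + p3 + p4 + p5 + p6 + p7 + p8 + p9))
      · linear_combination (1 - c) * (- a * e3 - b * e4 + (1 - c) * e5 +
          (p1 + p2 + p3 + p4 + p5 + p6 + p7 + p8 + p9))
  ext y
  constructor
  · intro hy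
    have hS := ((crit_iff _ _ _ _ _ _ _ _ _ y).mp hy).1.2.2.2.2.2.2.2.2
    have hc : 1 - (y 0 + y 1 + y 2) / (1 + (y 0 + y 1 + y 2)) = 1 / (1 + (y 0 + y 1 + y 2)) := by
      field_simp; ring
    have hc' : 1 - (y 0 + y 1 + y 2) / (1 + (y 0 + y 1 + y 2)) ≠ 0 := by
      rw [hc]; exact div_ne_zero one_ne_zero hS
    have hY : Ymap (y 0 / (1 + (y 0 + y 1 + y 2)), (y 0 + y 1) / (1 + (y 0 + y 1 + y 2)),
        (y 0 + y 1 + y 2) / (1 + (y 0 + y 1 + y 2))) = y := by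
      ext i
      unfold Ymap
      simp only [hc]
      fin_cases i
      · simp only [Fin.zero_eta, Matrix.cons_val]
        field_simp
      · simp only [Fin.mk_one, Matrix.cons_val]
        field_simp; ring
      · simp only [Fin.reduceFinMk, Matrix.cons_val]
        field_simp; ring
    refine ⟨_, ?_, hY⟩
    rw [← hY, key _ _ _ hc'] at hy
    exact hy
  · rintro ⟨⟨a, b, c⟩, hp, rfl⟩
    exact (key a b c hp.c1).mpr hp

theorem det_H (s23 s24 s25 s34 s35 s45 s36 s46 s56 : ℝ) {a b c : ℂ}
    (h : SE (s23 : ℂ) s24 s25 s34 s35 s45 s36 s46 s56 a b c) :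
    (amp6H (amp6Coeff s23 s24 s25 s34 s35 s45 s36 s46 s56) (Ymap (a, b, c))).det =
      - ((a * (b - a) * (c - b) * (1 - c)) ^ 2 *
        N3 (s23 : ℂ) s24 s25 s34 s35 s45 s36 s46 s56 a b c) := by
  obtain ⟨a0, b0, c0, a1, b1, c1, ab, ac, bc, e3, e4, e5⟩ := h
  have sum9 : ∀ f : Fin 9 → ℂ, ∑ a, f a =
      f 0 + f 1 + f 2 + f 3 + f 4 + f 5 + f 6 + f 7 + f 8 := by
    intro f
    simp only [Fin.sum_univ_succ, Fin.sum_univ_zero]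
    simp only [← add_assoc, add_zero]
    rfl
  let l : Fin 9 → ℂ := ![a, b - a, c - b, b, c, c - a, 1 - a, 1 - b, 1]
  let δ : Fin 3 → ℂ := ![a, b - a, c - b]
  have hY : ∀ i, Ymap (a, b, c) i = δ i / (1 - c) := by
    intro i; fin_cases i <;> rfl
  have hl : ∀ k, amp6L k (Ymap (a, b, c)) = l k / (1 - c) := by
    intro k
    fin_cases k <;>
      simp [amp6L, amp6Const, amp6Lin, Fin.sum_univ_three, Ymap, l] <;> field_simp <;> ring
  have hH : ∀ i j, amp6H (amp6Coeff s23 s24 s25 s34 s35 s45 s36 s46 s56) (Ymap (a, b, c)) i j =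
      ∑ k, (amp6Coeff s23 s24 s25 s34 s35 s45 s36 s46 s56 k : ℂ) / (l k) ^ 2 *
      (amp6Lin k j : ℂ) * ((if i = j then δ i * l k else 0) - δ i * δ j * (amp6Lin k i : ℂ)) := by
    intro i j
    simp only [amp6H, Matrix.of_apply, hY, hl]
    refine Finset.sum_congr rfl fun k _ => ?_
    have hlk : l k ≠ 0 := by
      fin_cases k <;> simp [l] <;> assumption
    split_ifs
    · field_simp
    · field_simp
      ring
  have p : ∀ s x : ℂ, x ≠ 0 → s = s / x ^ 2 * x ^ 2 := fun s x h => by field_simp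
  have p' : ∀ s x : ℂ, x ≠ 0 → s / x = s / x ^ 2 * x := fun s x h => by field_simp
  have p1 := p s23 a a0
  have p2 := p s24 b b0
  have p3 := p s25 c c0
  have p4 := p s34 (b - a) ab
  have p5 := p s35 (c - a) ac
  have p6 := p s45 (c - b) bc
  have p7 := p s36 (1 - a) a1
  have p8 := p s46 (1 - b) b1
  have p9 := p s56 (1 - c) c1
  rw [p' _ _ a0, p' _ _ ab, p' _ _ ac, p' _ _ a1] at e3
  rw [p' _ _ b0, p' _ _ ab, p' _ _ bc, p' _ _ b1] at e4
  rw [p' _ _ c0, p' _ _ ac, p' _ _ bc, p' _ _ c1] at e5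
  let B : Matrix (Fin 3) (Fin 3) ℂ := !![(1 - a) * a, -a * (b - a), -a * (c - b);
    (1 - b) * a, (1 - b) * (b - a), -b * (c - b); (1 - c) * a, (1 - c) * (b - a), (1 - c) * (c - b)]
  let N : Matrix (Fin 3) (Fin 3) ℂ := !![s23 / a ^ 2 + s36 / (1 - a) ^ 2 + s34 / (b - a) ^ 2 +
      s35 / (c - a) ^ 2, -(s34 / (b - a) ^ 2), -(s35 / (c - a) ^ 2);
    -(s34 / (b - a) ^ 2), s24 / b ^ 2 + s46 / (1 - b) ^ 2 + s34 / (b - a) ^ 2 + s45 / (c - b) ^ 2,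
    -(s45 / (c - b) ^ 2); -(s35 / (c - a) ^ 2), -(s45 / (c - b) ^ 2),
    s25 / c ^ 2 + s56 / (1 - c) ^ 2 + s35 / (c - a) ^ 2 + s45 / (c - b) ^ 2]
  have hHB : amp6H (amp6Coeff s23 s24 s25 s34 s35 s45 s36 s46 s56) (Ymap (a, b, c)) =
      -(B.transpose * N * B) := by
    ext i j
    rw [hH, sum9, Matrix.neg_apply]
    have hsum : ((s23 + s24 + s25 + s34 + s35 + s45 + s36 + s46 + s56 : ℝ) : ℂ) =
      s23 / a ^ 2 * a ^ 2 + s24 / b ^ 2 * b ^ 2 + s25 / c ^ 2 * c ^ 2 +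
      s34 / (b - a) ^ 2 * (b - a) ^ 2 + s35 / (c - a) ^ 2 * (c - a) ^ 2 +
      s45 / (c - b) ^ 2 * (c - b) ^ 2 + s36 / (1 - a) ^ 2 * (1 - a) ^ 2 +
      s46 / (1 - b) ^ 2 * (1 - b) ^ 2 + s56 / (1 - c) ^ 2 * (1 - c) ^ 2 := by
      push_cast
      linear_combination p1 + p2 + p3 + p4 + p5 + p6 + p7 + p8 + p9
    have hlast : ((-(s23 + s24 + s25 + s34 + s35 + s45 + s36 + s46 + s56) : ℝ) : ℂ) =
      -((s23 + s24 + s25 + s34 + s35 + s45 + s36 + s46 + s56 : ℝ) : ℂ) := by push_cast; ring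
    clear p1 p2 p3 p4 p5 p6 p7 p8 p9 hH hl hY
    simp only [amp6Coeff, l, N, Matrix.cons_val, hlast, hsum]
    clear hlast hsum
    clear_value N
    generalize (s23 : ℂ) / a ^ 2 = t23 at *
    generalize (s24 : ℂ) / b ^ 2 = t24 at *
    generalize (s25 : ℂ) / c ^ 2 = t25 at *
    generalize (s34 : ℂ) / (b - a) ^ 2 = t34 at *
    generalize (s35 : ℂ) / (c - a) ^ 2 = t35 at *
    generalize (s45 : ℂ) / (c - b) ^ 2 = t45 at *
    generalize (s36 : ℂ) / (1 - a) ^ 2 = t36 at *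
    generalize (s46 : ℂ) / (1 - b) ^ 2 = t46 at *
    generalize (s56 : ℂ) / (1 - c) ^ 2 = t56 at *
    have k1 := congrArg (fun x => (1 - a) * x) e3
    have k2 := congrArg (fun x => (1 - b) * x) e4
    have k3 := congrArg (fun x => (1 - c) * x) e5
    fin_cases i <;> fin_cases j <;>
      simp [amp6Lin, δ, B, Matrix.mul_apply, Fin.sum_univ_three]
    · linear_combination (a - 2 * a ^ 2) * (k1 + k2 + k3)
    · linear_combination (-a * (b - a)) * (2 * k1 - e3 + 2 * k2 + 2 * k3)
    · linear_combination (-a * (c - b)) * (2 * k1 - e3 + 2 * k2 - e4 + 2 * k3)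
    · linear_combination (-a * (b - a)) * (2 * k1 - e3 + 2 * k2 + 2 * k3)
    · linear_combination ((b - a) - 2 * (b - a) ^ 2) * (k1 - e3 + k2 + k3)
    · linear_combination (-(b - a) * (c - b)) * (2 * k1 - 2 * e3 + 2 * k2 - e4 + 2 * k3)
    · linear_combination (-a * (c - b)) * (2 * k1 - e3 + 2 * k2 - e4 + 2 * k3)
    · linear_combination (-(b - a) * (c - b)) * (2 * k1 - 2 * e3 + 2 * k2 - e4 + 2 * k3)
    · linear_combination ((c - b) - 2 * (c - b) ^ 2) * (k1 - e3 + k2 - e4 + k3)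
  have hB : B.det = a * (b - a) * (c - b) * (1 - c) := by
    simp [B, Matrix.det_fin_three]; ring
  have hN : N.det = N3 (s23 : ℂ) s24 s25 s34 s35 s45 s36 s46 s56 a b c := by
    simp only [N, Matrix.det_fin_three, N3, K3, D3]
    simp
    ring
  rw [hHB, Matrix.det_neg, Matrix.det_mul, Matrix.det_mul, Matrix.det_transpose, hB, hN]
  simp
  ring

def Avec (p : ℂ × ℂ × ℂ) : Fin 6 → ℂ :=
  A6 (p.1 / (1 - p.1)) (p.2.1 / (1 - p.2.1)) (p.2.2 / (1 - p.2.2))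

def Cvec (s23 s24 s25 s34 s35 s45 : ℂ) (p : ℂ × ℂ × ℂ) : Fin 6 → ℂ :=
  C6 (s23 / p.1) (s24 / p.2.1) (s25 / p.2.2) (s34 / (p.2.1 - p.1)) (s35 / (p.2.2 - p.1))
    (s45 / (p.2.2 - p.2.1))

theorem sum_AC {s23 s24 s25 s34 s35 s45 s36 s46 s56 : ℂ} {p q : ℂ × ℂ × ℂ}
    (hp : SE s23 s24 s25 s34 s35 s45 s36 s46 s56 p.1 p.2.1 p.2.2)
    (hq : SE s23 s24 s25 s34 s35 s45 s36 s46 s56 q.1 q.2.1 q.2.2) :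
    ∑ i, Avec p i * Cvec s23 s24 s25 s34 s35 s45 q i = if p = q then
      ((1 - p.1) * (1 - p.2.1) * (1 - p.2.2)) ^ 2 *
        N3 s23 s24 s25 s34 s35 s45 s36 s46 s56 p.1 p.2.1 p.2.2 else 0 := by
  have dif : ∀ x y : ℂ, 1 - x ≠ 0 → 1 - y ≠ 0 → y - x ≠ 0 → y / (1 - y) - x / (1 - x) ≠ 0 := by
    intro x y hx hy hxy
    have : y / (1 - y) - x / (1 - x) = (y - x) / ((1 - x) * (1 - y)) := by field_simp; ring
    rw [this]
    exact div_ne_zero hxy (mul_ne_zero hx hy)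
  unfold Avec Cvec
  rw [sum_A6_C6 _ _ _ _ _ _ (div_ne_zero hp.a0 hp.a1) (div_ne_zero hp.b0 hp.b1)
    (div_ne_zero hp.c0 hp.c1) (dif _ _ hp.a1 hp.b1 hp.ab) (dif _ _ hp.a1 hp.c1 hp.ac)
    (dif _ _ hp.b1 hp.c1 hp.bc)]
  split_ifs with hpq
  · subst hpq
    exact diag hp
  · apply orth hp hq
    by_contra hcon
    push Not at hcon
    exact hpq (Prod.ext hcon.1 (Prod.ext hcon.2.1 hcon.2.2))

/-- The six-point CHY string amplitude: `Crit(L)` consists of exactly six points,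
the toric Hessian is nonsingular at each of them, and the global residue
`∑_{ξ ∈ Crit(L)} (-det H_L(ξ))⁻¹` equals the sum of the fourteen terms
corresponding to the planar trivalent trees with six leaves. -/
theorem stmt19 (s23 s24 s25 s34 s35 s45 s36 s46 s56 : ℝ)
    (h23 : 0 < s23) (h24 : 0 < s24) (h25 : 0 < s25) (h34 : 0 < s34)
    (h35 : 0 < s35) (h45 : 0 < s45) (h36 : 0 < s36) (h46 : 0 < s46)
    (h56 : 0 < s56)
    (s12 s16 s123 s234 s345 : ℝ)
    (hs12 : s12 = s34 + s35 + s36 + s45 + s46 + s56)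
    (hs16 : s16 = s23 + s24 + s25 + s34 + s35 + s45)
    (hs123 : s123 = s45 + s46 + s56)
    (hs234 : s234 = s23 + s24 + s34)
    (hs345 : s345 = s34 + s35 + s45) :
    (amp6Crit (amp6Coeff s23 s24 s25 s34 s35 s45 s36 s46 s56)).Finite ∧
    (amp6Crit (amp6Coeff s23 s24 s25 s34 s35 s45 s36 s46 s56)).ncard = 6 ∧
    (∀ ξ ∈ amp6Crit (amp6Coeff s23 s24 s25 s34 s35 s45 s36 s46 s56),
      (amp6H (amp6Coeff s23 s24 s25 s34 s35 s45 s36 s46 s56) ξ).det ≠ 0) ∧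
    ∑ᶠ ξ ∈ amp6Crit (amp6Coeff s23 s24 s25 s34 s35 s45 s36 s46 s56),
        (-((amp6H (amp6Coeff s23 s24 s25 s34 s35 s45 s36 s46 s56) ξ).det)⁻¹) =
      ((1 / (s12 * s34 * s56) + 1 / (s12 * s56 * s123) + 1 / (s23 * s56 * s123) +
        1 / (s23 * s56 * s234) + 1 / (s34 * s56 * s234) + 1 / (s16 * s23 * s45) +
        1 / (s12 * s34 * s345) + 1 / (s12 * s45 * s123) + 1 / (s12 * s45 * s345) +
        1 / (s16 * s23 * s234) + 1 / (s16 * s34 * s234) + 1 / (s16 * s34 * s345) +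
        1 / (s16 * s45 * s345) + 1 / (s23 * s45 * s123) : ℝ) : ℂ) := by
  have c23 : (s23 : ℂ) ≠ 0 := by exact_mod_cast h23.ne'
  have c34 : (s34 : ℂ) ≠ 0 := by exact_mod_cast h34.ne'
  have c45 : (s45 : ℂ) ≠ 0 := by exact_mod_cast h45.ne'
  have c56 : (s56 : ℂ) ≠ 0 := by exact_mod_cast h56.ne'
  have c12 : (s12 : ℂ) ≠ 0 := by
    have : s12 ≠ 0 := by rw [hs12]; positivity
    exact_mod_cast this
  have c16 : (s16 : ℂ) ≠ 0 := by
    have : s16 ≠ 0 := by rw [hs16]; positivity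
    exact_mod_cast this
  have c123 : (s123 : ℂ) ≠ 0 := by
    have : s123 ≠ 0 := by rw [hs123]; positivity
    exact_mod_cast this
  have c234 : (s234 : ℂ) ≠ 0 := by
    have : s234 ≠ 0 := by rw [hs234]; positivity
    exact_mod_cast this
  have c345 : (s345 : ℂ) ≠ 0 := by
    have : s345 ≠ 0 := by rw [hs345]; positivity
    exact_mod_cast this
  obtain ⟨p0, p0inj, p0SE⟩ := SE_six h23 h24 h25 h34 h35 h45 h36 h46 h56
  obtain ⟨p, hp⟩ : ∃ p : Fin 6 → ℂ × ℂ × ℂ, p = fun i =>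
    (((p0 i).1 : ℂ), ((p0 i).2.1 : ℂ), ((p0 i).2.2 : ℂ)) := ⟨_, rfl⟩
  have pinj : Function.Injective p := by
    intro i j hij
    apply p0inj
    simp only [hp, Prod.mk.injEq, Complex.ofReal_inj] at hij
    exact Prod.ext hij.1 (Prod.ext hij.2.1 hij.2.2)
  have pSE : ∀ i, SE (s23 : ℂ) s24 s25 s34 s35 s45 s36 s46 s56 (p i).1 (p i).2.1 (p i).2.2 := by
    intro i
    rw [hp]
    exact (p0SE i).map Complex.ofRealHom
  clear hp
  let Δ : ℂ × ℂ × ℂ → ℂ := fun q => ((1 - q.1) * (1 - q.2.1) * (1 - q.2.2)) ^ 2 *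
        N3 (s23 : ℂ) s24 s25 s34 s35 s45 s36 s46 s56 q.1 q.2.1 q.2.2
  have hΔ : ∀ q : ℂ × ℂ × ℂ, SE (s23 : ℂ) s24 s25 s34 s35 s45 s36 s46 s56 q.1 q.2.1 q.2.2 →
      Δ q ≠ 0 := by
    intro q hq
    exact mul_ne_zero (pow_ne_zero _ (mul_ne_zero (mul_ne_zero hq.a1 hq.b1) hq.c1))
      (hq.N3_ne h23 h24 h25 h34 h35 h45 h36 h46 h56)
  let A : Matrix (Fin 6) (Fin 6) ℂ := Matrix.of fun i k => Avec (p i) k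
  let C : Matrix (Fin 6) (Fin 6) ℂ :=
    Matrix.of fun k j => Cvec s23 s24 s25 s34 s35 s45 (p j) k / Δ (p j)
  have hAC : A * C = 1 := by
    ext i j
    simp only [Matrix.mul_apply, A, C, Matrix.of_apply, ← mul_div_assoc, ← Finset.sum_div]
    rw [sum_AC (pSE i) (pSE j), Matrix.one_apply]
    by_cases hij : i = j
    · subst hij
      simp only [if_true]
      exact div_self (hΔ _ (pSE i))
    · rw [if_neg hij, if_neg (fun h => hij (pinj h)), zero_div]
  have hCA : C * A = 1 := mul_eq_one_comm.mp hAC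
  have hX : {q : ℂ × ℂ × ℂ | SE (s23 : ℂ) s24 s25 s34 s35 s45 s36 s46 s56 q.1 q.2.1 q.2.2} =
      Set.range p := by
    ext q
    constructor
    · intro hq
      by_contra hnot
      have h0 : A.mulVec (Cvec s23 s24 s25 s34 s35 s45 q) = 0 := by
        ext i
        simp only [Matrix.mulVec, dotProduct, A, Matrix.of_apply, Pi.zero_apply]
        rw [sum_AC (pSE i) hq, if_neg (fun h => hnot ⟨i, h⟩)]
      have h1 : Cvec s23 s24 s25 s34 s35 s45 q = 0 := by
        have := congrArg C.mulVec h0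
        rwa [Matrix.mulVec_mulVec, hCA, Matrix.one_mulVec, Matrix.mulVec_zero] at this
      have h2 := sum_AC hq hq
      rw [h1, if_pos rfl] at h2
      simp only [Pi.zero_apply, mul_zero, Finset.sum_const_zero] at h2
      exact hΔ q hq h2.symm
    · rintro ⟨i, rfl⟩
      exact pSE i
  have hcrit : amp6Crit (amp6Coeff s23 s24 s25 s34 s35 s45 s36 s46 s56) =
      Set.range (fun i => Ymap (p i)) := by
    rw [crit_eq_image, hX, ← Set.range_comp]
    rfl
  have yinj : Function.Injective (fun i => Ymap (p i)) := by
    intro i j hij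
    exact pinj (Ymap_inj (pSE i).c1 (pSE j).c1 hij)
  have hdet : ∀ i, (amp6H (amp6Coeff s23 s24 s25 s34 s35 s45 s36 s46 s56) (Ymap (p i))).det =
      - (((p i).1 * ((p i).2.1 - (p i).1) * ((p i).2.2 - (p i).2.1) * (1 - (p i).2.2)) ^ 2 *
        N3 (s23 : ℂ) s24 s25 s34 s35 s45 s36 s46 s56 (p i).1 (p i).2.1 (p i).2.2) :=
    fun i => det_H s23 s24 s25 s34 s35 s45 s36 s46 s56 (pSE i)
  rw [hcrit]
  refine ⟨Set.finite_range _, ?_, ?_, ?_⟩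
  · rw [← Set.image_univ, Set.ncard_image_of_injective _ yinj, Set.ncard_univ]
    simp
  · rintro _ ⟨i, rfl⟩
    rw [hdet]
    have := pSE i
    exact neg_ne_zero.mpr (mul_ne_zero (pow_ne_zero _ (mul_ne_zero (mul_ne_zero (mul_ne_zero
      this.a0 this.ab) this.bc) this.c1)) (this.N3_ne h23 h24 h25 h34 h35 h45 h36 h46 h56))
  · rw [finsum_mem_range yinj, finsum_eq_sum_of_fintype]
    let d : Fin 6 → ℂ := d6 (s23 : ℂ) s34 s45 s56 s12 s16 s123 s234 s345
    have hterm : ∀ i, -((amp6H (amp6Coeff s23 s24 s25 s34 s35 s45 s36 s46 s56)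
        (Ymap (p i))).det)⁻¹ = ∑ k, d k * (C k i * A i 0) := by
      intro i
      have hpt := pt_expand (pSE i) (s12 : ℂ) s16 s123 s234 s345 (by rw [hs12]; push_cast; rfl)
        (by rw [hs16]; push_cast; rfl) (by rw [hs123]; push_cast; rfl)
        (by rw [hs234]; push_cast; rfl) (by rw [hs345]; push_cast; rfl)
        c12 c16 c123 c234 c345 c23 c34 c45 c56
      have e1 : ∑ k, d k * (C k i * A i 0) = (∑ k, d k * Cvec s23 s24 s25 s34 s35 s45 (p i) k) *
          (A i 0 / Δ (p i)) := by
        rw [Finset.sum_mul]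
        refine Finset.sum_congr rfl fun k _ => ?_
        simp only [C, Matrix.of_apply]
        ring
      rw [e1]
      unfold Cvec
      rw [hpt, hdet]
      have hN := (pSE i).N3_ne h23 h24 h25 h34 h35 h45 h36 h46 h56
      simp only [A, Avec, A6, Matrix.of_apply, Matrix.cons_val_zero, Δ]
      obtain ⟨a0, b0, c0, a1, b1, c1, ab, ac, bc, -, -, -⟩ := pSE i
      generalize N3 (s23 : ℂ) s24 s25 s34 s35 s45 s36 s46 s56 (p i).1 (p i).2.1 (p i).2.2 = n at *
      generalize (p i).1 = a at *
      generalize (p i).2.1 = b at *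
      generalize (p i).2.2 = c at *
      have q1 : b / (1 - b) - a / (1 - a) = (b - a) / ((1 - a) * (1 - b)) := by field_simp; ring
      have q3 : c / (1 - c) - b / (1 - b) = (c - b) / ((1 - b) * (1 - c)) := by field_simp; ring
      rw [q1, q3]
      field_simp
    rw [Finset.sum_congr rfl (fun i _ => hterm i), Finset.sum_comm]
    have hk : ∀ k, ∑ i, d k * (C k i * A i 0) = d k * (1 : Matrix (Fin 6) (Fin 6) ℂ) k 0 := by
      intro k
      rw [← Finset.mul_sum, ← hCA, Matrix.mul_apply]
    rw [Finset.sum_congr rfl (fun k _ => hk k)]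
    simp only [Matrix.one_apply, mul_ite, mul_one, mul_zero, Finset.sum_ite_eq', Finset.mem_univ,
      if_true]
    simp only [d, d6, Matrix.cons_val_zero]
    push_cast
    rfl

end
end
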